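/- arXiv:2411.11634 — 2 statements merged into one kernel-verified Lean document; each statement's English description precedes it below -/
import Mathlib

section
/- Let A ∈ M_n(ℤ) be non-singular with h_A irreducible over ℚ and P'(A) ≠ ∅, and assume there exists a prime p with gcd(n, t_p) = 1. Let K be a number field with ring of integers O_K and λ ∈ O_K a root of h_A with K = ℚ(λ). Then: (a) the subring End(G_A) = {T ∈ M_n(ℚ) : T(G_A) ⊆ G_A} of M_n(ℚ) is a finitely generated module over its subring ℤ[A, A⁻¹] (the subring of M_n(ℚ) generated by A and A⁻¹); and (b) if O_K = ℤ[λ] (i.e., every element of O_K is an integer polynomial in λ), then End(G_A) = ℤ[A, A⁻¹]. -/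
open Matrix Polynomial

noncomputable section

/-- The matrix `A` viewed over `ℚ`. -/
def Aq {n : ℕ} (A : Matrix (Fin n) (Fin n) ℤ) : Matrix (Fin n) (Fin n) ℚ :=
  A.map (Int.cast : ℤ → ℚ)

/-- The group `G_A = {A^k x : x ∈ ℤ^n, k ∈ ℤ} ⊆ ℚ^n`. -/
def GA {n : ℕ} (A : Matrix (Fin n) (Fin n) ℤ) : Set (Fin n → ℚ) :=
  {v | ∃ (k : ℤ) (x : Fin n → ℤ), v = (Aq A ^ k) *ᵥ fun i => ((x i : ℚ))}

/-- `P'(A)`: primes dividing `det A` such that `h_A ≢ x^n (mod p)`. -/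
def Pbad {n : ℕ} (A : Matrix (Fin n) (Fin n) ℤ) : Set ℕ :=
  {p | p.Prime ∧ (p : ℤ) ∣ A.det ∧ A.charpoly.map (Int.castRingHom (ZMod p)) ≠ X ^ n}

/-- `t_p`: multiplicity of `0` as a root of `h_A` mod `p`. -/
def tp {n : ℕ} (A : Matrix (Fin n) (Fin n) ℤ) (p : ℕ) : ℕ :=
  Polynomial.rootMultiplicity 0 (A.charpoly.map (Int.castRingHom (ZMod p)))

/-
The operators on `V = ℚ ^ n` with a nonzero integer multiple mapping `G_A` into itself form a
`ℚ`-algebra `R` containing `A`. As `h_A` is irreducible, `V` is simple over `R` and `D = End_R V`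
is commutative, being contained in `ℚ[A]`. By the double centralizer theorem `R` contains the
matrix units of a `D`-basis of `V`, so with `m = dim_D V` the group `G_A` is, up to finite index,
an `m`-th power. Hence `m` divides both `n` and `dim (G_A / p G_A) = n - t_p` for every prime `p`,
which forces `m = 1`. Then `R = D` is commutative and every endomorphism of `G_A` commutes with
`A`, so it has the form `A⁻ᵏ M` with `M` in the centralizer of `A` in `M_n(ℤ)`, a finitely
generated `ℤ`-module. Such an `M` is an element of `ℚ[A]` integral over `ℤ`; if `ℤ[λ]` is
integrally closed, the isomorphism `ℚ[A] ≅ ℚ[λ]` shows that it lies in `ℤ[A]`.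
-/

open Module
open scoped Pointwise

section QuotientByMultiples

variable {V W ι : Type*} [AddCommGroup V] [AddCommGroup W]

/-- The index `[G : kG]` of a subgroup `G` of an abelian group (with value `0` if it is infinite);
for `k = p` prime it measures the dimension of `G / pG` over `𝔽_p`. -/
def nsmulIndex (G : AddSubgroup V) (k : ℕ) : ℕ :=
  (k • G).relIndex G

theorem nsmul_addSubgroup_le (G : AddSubgroup V) (k : ℕ) : k • G ≤ G := by
  rintro _ ⟨g, hg, rfl⟩
  exact G.nsmul_mem hg k

theorem nsmul_addSubgroup_map (f : V →+ W) (G : AddSubgroup V) (k : ℕ) :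
    k • G.map f = (k • G).map f := by
  ext w
  simp [AddSubgroup.mem_smul_pointwise_iff_exists]

theorem nsmulIndex_map {f : V →+ W} (hf : Function.Injective f) (G : AddSubgroup V) (k : ℕ) :
    nsmulIndex (G.map f) k = nsmulIndex G k := by
  rw [nsmulIndex, nsmul_addSubgroup_map, AddSubgroup.relIndex_map_map_of_injective _ _ hf,
    nsmulIndex]

theorem nsmulIndex_top_pi [Fintype ι] (k : ℕ) :
    nsmulIndex (⊤ : AddSubgroup (ι → V)) k = nsmulIndex (⊤ : AddSubgroup V) k ^ Fintype.card ι := by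
  have hpi : k • (⊤ : AddSubgroup (ι → V)) =
      AddSubgroup.pi Set.univ fun _ => k • (⊤ : AddSubgroup V) := by
    ext x
    simp [AddSubgroup.mem_smul_pointwise_iff_exists, AddSubgroup.mem_pi, funext_iff,
      Classical.skolem]
  simp only [nsmulIndex, AddSubgroup.relIndex_top_right, hpi, AddSubgroup.index_pi,
    Finset.prod_const, Finset.card_univ]

theorem relIndex_nsmul_nsmul [IsAddTorsionFree V] (G G' : AddSubgroup V) {k : ℕ} (hk : k ≠ 0) :
    (k • G).relIndex (k • G') = G.relIndex G' :=
  AddSubgroup.relIndex_map_map_of_injective G G' (nsmul_right_injective hk)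

theorem nsmulIndex_eq_of_nsmul_le [IsAddTorsionFree V] {G G' : AddSubgroup V} (hle : G ≤ G')
    {N : ℕ} (hN : N ≠ 0) (hNG : N • G' ≤ G) (hfin : nsmulIndex G N ≠ 0) {k : ℕ} (hk : k ≠ 0) :
    nsmulIndex G' k = nsmulIndex G k := by
  have hindex : G.relIndex G' ≠ 0 := by
    rw [← relIndex_nsmul_nsmul G G' hN]
    intro h
    apply hfin
    calc nsmulIndex G N
      _ = (N • G).relIndex (N • G') * (N • G').relIndex G :=
          (AddSubgroup.relIndex_mul_relIndex _ _ _ (AddSubgroup.map_mono hle) hNG).symm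
      _ = 0 := mul_eq_zero_of_left h _
  have hchain : nsmulIndex G k * G.relIndex G' = nsmulIndex G' k * G.relIndex G' :=
    calc nsmulIndex G k * G.relIndex G'
      _ = (k • G).relIndex G' :=
          AddSubgroup.relIndex_mul_relIndex _ _ _ (nsmul_addSubgroup_le G k) hle
      _ = (k • G).relIndex (k • G') * nsmulIndex G' k :=
          (AddSubgroup.relIndex_mul_relIndex _ _ _ (AddSubgroup.map_mono hle)
            (nsmul_addSubgroup_le G' k)).symm
      _ = nsmulIndex G' k * G.relIndex G' := by rw [relIndex_nsmul_nsmul G G' hk, mul_comm]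
  exact (Nat.eq_of_mul_eq_mul_right (Nat.pos_of_ne_zero hindex) hchain).symm

end QuotientByMultiples

section CoordinateSubgroup

variable {ι D V : Type*} [Fintype ι] [Ring D] [AddCommGroup V] [Module D V]

/-- The embedding of `H ^ ι` into `V` as the vectors whose coordinates in the basis `b` lie in
the subgroup `H` of the scalars. -/
def coordEmbedding (b : Basis ι D V) (H : AddSubgroup D) : (ι → H) →+ V :=
  b.equivFun.symm.toLinearMap.toAddMonoidHom.comp (H.subtype.compLeft ι)

theorem coordEmbedding_apply (b : Basis ι D V) (H : AddSubgroup D) (x : ι → H) :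
    coordEmbedding b H x = ∑ i, (x i : D) • b i :=
  b.equivFun_symm_apply _

theorem coordEmbedding_injective (b : Basis ι D V) (H : AddSubgroup D) :
    Function.Injective (coordEmbedding b H) :=
  b.equivFun.symm.injective.comp H.subtype_injective.comp_left

theorem nsmulIndex_range_coordEmbedding (b : Basis ι D V) (H : AddSubgroup D) (k : ℕ) :
    nsmulIndex (coordEmbedding b H).range k =
      nsmulIndex (⊤ : AddSubgroup H) k ^ Fintype.card ι := by
  rw [AddMonoidHom.range_eq_map, nsmulIndex_map (coordEmbedding_injective b H), nsmulIndex_top_pi]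

theorem exists_commensurable_range_coordEmbedding (b : Basis ι D V) (G : AddSubgroup V) {N : ℕ}
    (hG : ∀ i j, ∀ g ∈ G, N • (b.repr g j • b i) ∈ G) :
    ∃ H : AddSubgroup D, G ≤ (coordEmbedding b H).range ∧ N • (coordEmbedding b H).range ≤ G := by
  let H : AddSubgroup D := ⨆ j, G.map (b.coord j).toAddMonoidHom
  have hsmul (i : ι) {h : D} (hh : h ∈ H) : N • (h • b i) ∈ G := by
    induction hh using AddSubgroup.iSup_induction' with
    | hp j x hx =>
      obtain ⟨g, hg, rfl⟩ := hx
      exact hG i j g hg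
    | h1 => simp
    | hadd x y _ _ hx hy => rw [add_smul, smul_add]; exact G.add_mem hx hy
  refine ⟨H, fun g hg => ?_, ?_⟩
  · refine ⟨fun j => ⟨b.repr g j, AddSubgroup.mem_iSup_of_mem j ⟨g, hg, rfl⟩⟩, ?_⟩
    rw [coordEmbedding_apply]
    exact b.sum_repr g
  · rintro _ ⟨_, ⟨x, rfl⟩, rfl⟩
    change N • coordEmbedding b H x ∈ G
    rw [coordEmbedding_apply, Finset.smul_sum]
    exact G.sum_mem fun i _ => hsmul i (x i).2

theorem card_dvd_of_nsmulIndex_eq_pow [IsAddTorsionFree V] (b : Basis ι D V) (G : AddSubgroup V)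
    {N : ℕ} (hN : N ≠ 0) (hG : ∀ i j, ∀ g ∈ G, N • (b.repr g j • b i) ∈ G)
    (hfin : nsmulIndex G N ≠ 0) {p r : ℕ} (hp : p.Prime) (hr : nsmulIndex G p = p ^ r) :
    Fintype.card ι ∣ r := by
  obtain ⟨H, hGH, hHG⟩ := exists_commensurable_range_coordEmbedding b G hG
  have hpow : p ^ r = nsmulIndex (⊤ : AddSubgroup H) p ^ Fintype.card ι := by
    rw [← hr, ← nsmulIndex_range_coordEmbedding b,
      nsmulIndex_eq_of_nsmul_le hGH hN hHG hfin hp.ne_zero]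
  have hval := congrArg (fun m => m.factorization p) hpow
  simp only [Nat.factorization_pow, Finsupp.smul_apply, hp.factorization_self, smul_eq_mul,
    mul_one] at hval
  exact ⟨_, hval⟩

end CoordinateSubgroup

section IrreducibleAnnihilator

variable {k B C M : Type*} [Field k] [Ring B] [Algebra k B] [Ring C] [Algebra k C]
  [AddCommGroup M] [Module B M] {f : k[X]} {x : B} {y : C}

theorem aeval_smul_eq_zero_iff_dvd (hf : Irreducible f) (hx : aeval x f = 0) {v : M} (hv : v ≠ 0)
    {g : k[X]} : aeval x g • v = 0 ↔ f ∣ g := by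
  constructor
  · contrapose!
    intro hfg hg
    obtain ⟨s, t, hst⟩ := hf.coprime_iff_not_dvd.2 hfg
    apply hv
    calc v = aeval x (s * f + t * g) • v := by rw [hst, map_one, one_smul]
      _ = 0 := by rw [map_add, map_mul, map_mul, hx, mul_zero, zero_add, mul_smul, hg, smul_zero]
  · rintro ⟨c, rfl⟩
    rw [map_mul, hx, zero_mul, zero_smul]

theorem aeval_eq_zero_iff_dvd [Nontrivial B] (hf : Irreducible f) (hx : aeval x f = 0)
    {g : k[X]} : aeval x g = 0 ↔ f ∣ g := by
  simpa using aeval_smul_eq_zero_iff_dvd hf hx (one_ne_zero (α := B))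

theorem aeval_eq_zero_congr [Nontrivial B] [Nontrivial C] (hf : Irreducible f)
    (hx : aeval x f = 0) (hy : aeval y f = 0) {g : k[X]} : aeval x g = 0 ↔ aeval y g = 0 := by
  rw [aeval_eq_zero_iff_dvd hf hx, aeval_eq_zero_iff_dvd hf hy]

theorem isIntegral_aeval_of_isIntegral_aeval {R : Type*} [CommRing R] [Algebra R k] [Algebra R B]
    [IsScalarTower R k B] [Algebra R C] [IsScalarTower R k C] [Nontrivial B] [Nontrivial C]
    (hf : Irreducible f) (hx : aeval x f = 0) (hy : aeval y f = 0) {q : k[X]}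
    (hq : IsIntegral R (aeval x q)) : IsIntegral R (aeval y q) := by
  obtain ⟨P, hP, hPx⟩ := hq
  refine ⟨P, hP, ?_⟩
  rw [← aeval_def, ← aeval_map_algebraMap k, ← aeval_comp] at hPx ⊢
  exact (aeval_eq_zero_congr hf hx hy).1 hPx

theorem mem_adjoin_singleton_of_isIntegral {R : Type*} [CommRing R] [Algebra R k] [Algebra R B]
    [IsScalarTower R k B] [Algebra R C] [IsScalarTower R k C] [Nontrivial B] [Nontrivial C]
    (hf : Irreducible f) (hx : aeval x f = 0) (hy : aeval y f = 0)
    (hclosed : ∀ z : C, IsIntegral R z → z ∈ Algebra.adjoin R {y}) {b : B}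
    (hb : b ∈ Algebra.adjoin k {x}) (hint : IsIntegral R b) : b ∈ Algebra.adjoin R {x} := by
  rw [Algebra.adjoin_singleton_eq_range_aeval] at hb
  obtain ⟨q, rfl⟩ := hb
  have hqy := hclosed _ (isIntegral_aeval_of_isIntegral_aeval hf hx hy hint)
  rw [Algebra.adjoin_singleton_eq_range_aeval] at hqy ⊢
  obtain ⟨r, hr⟩ := hqy
  refine ⟨r, ?_⟩
  have hzero : aeval y (r.map (algebraMap R k) - q) = 0 := by
    rw [map_sub, aeval_map_algebraMap, sub_eq_zero]
    exact hr
  rw [← aeval_eq_zero_congr hf hx hy, map_sub, aeval_map_algebraMap, sub_eq_zero] at hzero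
  exact hzero

end IrreducibleAnnihilator

section IrreducibleCharpoly

variable {k V : Type*} [Field k] [AddCommGroup V] [Module k V] [Module.Finite k V] {a : End k V}

theorem exists_aeval_apply_eq (ha : Irreducible a.charpoly) {v : V} (hv : v ≠ 0) (w : V) :
    ∃ q : k[X], aeval a q v = w := by
  let φ : degreeLT k (finrank k V) →ₗ[k] V :=
    LinearMap.applyₗ v ∘ₗ (aeval a).toLinearMap ∘ₗ (degreeLT k (finrank k V)).subtype
  have hφ : Function.Injective φ := by
    rw [injective_iff_map_eq_zero]
    rintro ⟨q, hq⟩ hqv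
    have hdvd : a.charpoly ∣ q :=
      (aeval_smul_eq_zero_iff_dvd ha a.aeval_self_charpoly hv).1 hqv
    rw [mem_degreeLT, ← a.charpoly_natDegree, ← degree_eq_natDegree ha.ne_zero] at hq
    exact Subtype.ext (eq_zero_of_dvd_of_degree_lt hdvd hq)
  have hdim : finrank k (degreeLT k (finrank k V)) = finrank k V := by
    rw [(degreeLTEquiv k _).finrank_eq, finrank_fin_fun]
  have : Module.Finite k (degreeLT k (finrank k V)) :=
    Module.Finite.equiv (degreeLTEquiv k _).symm
  obtain ⟨q, hq⟩ := (LinearMap.injective_iff_surjective_of_finrank_eq_finrank hdim).1 hφ w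
  exact ⟨q, hq⟩

theorem nontrivial_of_irreducible_charpoly (ha : Irreducible a.charpoly) : Nontrivial V := by
  rw [← finrank_pos_iff (R := k), ← a.charpoly_natDegree]
  exact ha.natDegree_pos

theorem mem_adjoin_singleton_of_commute (ha : Irreducible a.charpoly) {T : End k V}
    (hT : Commute T a) : T ∈ Algebra.adjoin k {a} := by
  have := nontrivial_of_irreducible_charpoly ha
  obtain ⟨v, hv⟩ := exists_ne (0 : V)
  obtain ⟨q, hq⟩ := exists_aeval_apply_eq ha hv (T v)
  suffices T = aeval a q from this ▸ aeval_mem_adjoin_singleton k a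
  ext w
  obtain ⟨s, rfl⟩ := exists_aeval_apply_eq ha hv w
  have hTs : Commute T (aeval a s) :=
    Algebra.commute_of_mem_adjoin_singleton_of_commute (aeval_mem_adjoin_singleton k a) hT
  calc T (aeval a s v)
    _ = aeval a s (T v) := LinearMap.congr_fun hTs v
    _ = aeval a s (aeval a q v) := by rw [hq]
    _ = aeval a q (aeval a s v) := LinearMap.congr_fun (Commute.all s q |>.map (aeval a)) v

theorem isSimpleModule_of_irreducible_charpoly (ha : Irreducible a.charpoly)
    {R : Subalgebra k (End k V)} (haR : a ∈ R) : IsSimpleModule R V := by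
  rw [isSimpleModule_iff_toSpanSingleton_surjective]
  refine ⟨nontrivial_of_irreducible_charpoly ha, fun v hv w => ?_⟩
  obtain ⟨q, hq⟩ := exists_aeval_apply_eq ha hv w
  exact ⟨⟨aeval a q, Algebra.adjoin_le (by simpa using haR) (aeval_mem_adjoin_singleton k a)⟩, hq⟩

theorem commute_end_of_irreducible_charpoly (ha : Irreducible a.charpoly)
    {R : Subalgebra k (End k V)} (haR : a ∈ R) (d d' : End R V) : Commute d d' := by
  have hcomm (e : End R V) : Commute (e.restrictScalars k) a :=
    LinearMap.ext fun v => e.map_smul ⟨a, haR⟩ v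
  have hdd' := Algebra.commute_of_mem_adjoin_singleton_of_commute
    (mem_adjoin_singleton_of_commute ha (hcomm d')) (hcomm d)
  exact LinearMap.ext fun v => LinearMap.congr_fun hdd' v

end IrreducibleCharpoly

section DoubleCentralizer

variable {k V : Type*} [Field k] [AddCommGroup V] [Module k V]

theorem commute_of_finrank_end_eq_one {R : Subalgebra k (End k V)} [IsSimpleModule R V]
    (hdim : finrank (End R V) V = 1) (hcomm : ∀ d d' : End R V, Commute d d')
    {S T : End k V} (hS : S ∈ R) (hT : T ∈ R) :
    Commute S T := by
  classical
  let _ : DivisionRing (End R V) := Module.End.instDivisionRing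
  obtain ⟨v, -, hspan⟩ := finrank_eq_one_iff'.1 hdim
  have hscalar {U : End k V} (hU : U ∈ R) : ∃ d : End R V, ∀ w, U w = d w := by
    obtain ⟨d, hd⟩ := hspan (U v)
    refine ⟨d, fun w => ?_⟩
    obtain ⟨e, rfl⟩ := hspan w
    calc U (e v)
      _ = e (U v) := (e.map_smul ⟨U, hU⟩ v).symm
      _ = e (d v) := by rw [← hd]; rfl
      _ = d (e v) := LinearMap.congr_fun (hcomm e d) v
  obtain ⟨s, hs⟩ := hscalar hS
  obtain ⟨t, ht⟩ := hscalar hT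
  ext w
  calc S (T w)
    _ = s (t w) := by rw [ht, hs]
    _ = t (s w) := LinearMap.congr_fun (hcomm s t) w
    _ = T (S w) := by rw [ht, hs]

variable [Module.Finite k V] (R : Subalgebra k (End k V))

theorem finite_end : Module.Finite (End R V) V :=
  Module.Finite.of_restrictScalars_finite k (End R V) V

variable [IsSimpleModule R V]

theorem finrank_end_dvd_finrank : finrank (End R V) V ∣ finrank k V := by
  classical
  let _ : DivisionRing (End R V) := Module.End.instDivisionRing
  exact Dvd.intro_left _ (finrank_mul_finrank k (End R V) V)

theorem exists_mem_forall_apply_eq (f : End (End R V) V) : ∃ e ∈ R, ∀ v, e v = f v := by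
  have := finite_end R
  obtain ⟨e, rfl⟩ := Module.Finite.toModuleEnd_moduleEnd_surjective (R := R) (M := V) f
  exact ⟨e, e.2, fun _ => rfl⟩

end DoubleCentralizer

section QuasiEndomorphisms

variable {V : Type*} [AddCommGroup V] [Module ℚ V]

/-- The algebra of quasi-endomorphisms of `G`: the operators mapping `G` into itself after
multiplication by a nonzero integer. -/
def quasiEnd (G : AddSubgroup V) : Subalgebra ℚ (End ℚ V) where
  carrier := {f | ∃ N : ℕ, N ≠ 0 ∧ ∀ g ∈ G, N • f g ∈ G}
  mul_mem' := by
    rintro f f' ⟨N, hN, h⟩ ⟨N', hN', h'⟩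
    refine ⟨N * N', mul_ne_zero hN hN', fun g hg => ?_⟩
    have := h _ (h' g hg)
    rwa [map_nsmul, smul_smul] at this
  add_mem' := by
    rintro f f' ⟨N, hN, h⟩ ⟨N', hN', h'⟩
    refine ⟨N * N', mul_ne_zero hN hN', fun g hg => ?_⟩
    rw [LinearMap.add_apply, smul_add]
    refine G.add_mem ?_ ?_
    · rw [mul_comm, mul_smul]; exact G.nsmul_mem (h g hg) _
    · rw [mul_smul]; exact G.nsmul_mem (h' g hg) _
  algebraMap_mem' q := by
    refine ⟨q.den, q.den_nz, fun g hg => ?_⟩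
    have hclear : q.den • algebraMap ℚ (End ℚ V) q g = q.num • g := by
      rw [Module.algebraMap_end_apply, ← Nat.cast_smul_eq_nsmul ℚ, smul_smul, mul_comm,
        Rat.mul_den_eq_num, Int.cast_smul_eq_zsmul]
    rw [hclear]
    exact G.zsmul_mem hg _

theorem mem_quasiEnd_of_mapsTo {G : AddSubgroup V} {f : End ℚ V} (hf : ∀ g ∈ G, f g ∈ G) :
    f ∈ quasiEnd G :=
  ⟨1, one_ne_zero, by simpa using hf⟩

theorem exists_common_multiplier {ι : Type*} [Finite ι] {G : AddSubgroup V} {f : ι → End ℚ V}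
    (hf : ∀ i, f i ∈ quasiEnd G) : ∃ N : ℕ, N ≠ 0 ∧ ∀ i, ∀ g ∈ G, N • f i g ∈ G := by
  have := Fintype.ofFinite ι
  choose N hN hNG using hf
  refine ⟨∏ i, N i, Finset.prod_ne_zero_iff.2 fun i _ => hN i, fun i g hg => ?_⟩
  obtain ⟨c, hc⟩ := Finset.dvd_prod_of_mem N (Finset.mem_univ i)
  rw [hc, mul_comm, mul_smul]
  exact G.nsmul_mem (hNG i g hg) c

theorem finrank_end_quasiEnd_dvd [Module.Finite ℚ V] (G : AddSubgroup V)
    [IsSimpleModule (quasiEnd G) V] (hfin : ∀ N, N ≠ 0 → nsmulIndex G N ≠ 0) {p r : ℕ}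
    (hp : p.Prime) (hr : nsmulIndex G p = p ^ r) :
    finrank (End (quasiEnd G) V) V ∣ r := by
  classical
  let _ : DivisionRing (End (quasiEnd G) V) := Module.End.instDivisionRing
  have := finite_end (quasiEnd G)
  have : IsAddTorsionFree V := IsAddTorsionFree.of_module_rat V
  let b := finBasis (End (quasiEnd G) V) V
  choose e he hcoord using fun ij : Fin _ × Fin _ =>
    exists_mem_forall_apply_eq (quasiEnd G) ((b.coord ij.2).smulRight (b ij.1))
  obtain ⟨N, hN, hNG⟩ := exists_common_multiplier he
  rw [← Fintype.card_fin (finrank (End (quasiEnd G) V) V)]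
  refine card_dvd_of_nsmulIndex_eq_pow b G hN (fun i j g hg => ?_) (hfin N hN) hp hr
  have := hNG (i, j) g hg
  rwa [hcoord] at this

end QuasiEndomorphisms

section LatticeVectors

variable {ι : Type*}

/-- The coordinatewise image of an integer vector in `R ^ ι`: the inclusion of the lattice for
`R = ℚ`, reduction modulo `N` for `R = ZMod N`. -/
def castVec (R : Type*) [Ring R] : (ι → ℤ) →+ (ι → R) :=
  (Int.castAddHom R).compLeft ι

theorem castVec_apply (R : Type*) [Ring R] (x : ι → ℤ) (i : ι) : castVec R x i = x i :=
  rfl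

theorem castVec_zmod_surjective (N : ℕ) :
    Function.Surjective (castVec (ZMod N) : (ι → ℤ) →+ (ι → ZMod N)) :=
  (ZMod.intCast_surjective (n := N)).comp_left

theorem castVec_pow_mulVec (R : Type*) [CommRing R] [Fintype ι] [DecidableEq ι]
    (A : Matrix ι ι ℤ) (k : ℕ) (x : ι → ℤ) :
    castVec R (A ^ k *ᵥ x) = A.map (Int.castRingHom R) ^ k *ᵥ castVec R x := by
  rw [← Matrix.map_pow]
  exact funext fun i => (Int.castRingHom R).map_mulVec (A ^ k) x i

theorem inv_smul_castVec_mem_range_iff {N : ℕ} (hN : N ≠ 0) {x : ι → ℤ} :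
    (N : ℚ)⁻¹ • castVec ℚ x ∈ (castVec ℚ : (ι → ℤ) →+ (ι → ℚ)).range ↔
      castVec (ZMod N) x = 0 := by
  have hNq : (N : ℚ) ≠ 0 := Nat.cast_ne_zero.2 hN
  have hcoord (c m : ℤ) : (c : ℚ) = (N : ℚ)⁻¹ * m ↔ m = N * c := by
    rw [eq_inv_mul_iff_mul_eq₀ hNq, eq_comm]
    norm_cast
  simp only [AddMonoidHom.mem_range, funext_iff, castVec_apply, Pi.smul_apply, smul_eq_mul, hcoord,
    Pi.zero_apply, ZMod.intCast_zmod_eq_zero_iff_dvd, dvd_def, Classical.skolem]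

end LatticeVectors

theorem mem_nsmul_addSubgroup_iff {V : Type*} [AddCommGroup V] [Module ℚ V] (G : AddSubgroup V)
    {N : ℕ} (hN : N ≠ 0) {v : V} : v ∈ N • G ↔ (N : ℚ)⁻¹ • v ∈ G := by
  have hNq : (N : ℚ) ≠ 0 := Nat.cast_ne_zero.2 hN
  simp only [AddSubgroup.mem_smul_pointwise_iff_exists, ← Nat.cast_smul_eq_nsmul ℚ]
  constructor
  · rintro ⟨g, hg, rfl⟩
    rwa [inv_smul_smul₀ hNq]
  · exact fun hv => ⟨_, hv, smul_inv_smul₀ hNq v⟩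

theorem exists_sub_pow_apply_mem_maxGenEigenspace_zero {R M : Type*} [CommRing R] [AddCommGroup M]
    [Module R M] [IsArtinian R M] (f : End R M) (k : ℕ) (z : M) :
    ∃ u, z - (f ^ k) u ∈ f.maxGenEigenspace 0 := by
  obtain ⟨m, hm, hkm⟩ :=
    (f.eventually_codisjoint_ker_pow_range_pow.and (Filter.eventually_ge_atTop k)).exists
  obtain ⟨y, _, hy, ⟨u, rfl⟩, rfl⟩ := Submodule.codisjoint_iff_exists_add_eq.1 hm z
  refine ⟨(f ^ (m - k)) u, (End.mem_maxGenEigenspace _ _ _).2 ⟨m, ?_⟩⟩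
  rw [← End.mul_apply, ← pow_add, Nat.add_sub_cancel' hkm, add_sub_cancel_right, zero_smul,
    sub_zero]
  exact hy

section GroupOfMatrix

variable {n : ℕ} (A : Matrix (Fin n) (Fin n) ℤ)

theorem isUnit_det_Aq {A : Matrix (Fin n) (Fin n) ℤ} (hA : A.det ≠ 0) : IsUnit (Aq A).det := by
  have hdet : (Aq A).det = (A.det : ℚ) := ((Int.castRingHom ℚ).map_det A).symm
  rw [hdet, isUnit_iff_ne_zero]
  exact Int.cast_ne_zero.2 hA

theorem Aq_pow_mulVec_castVec (k : ℕ) (x : Fin n → ℤ) :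
    Aq A ^ k *ᵥ castVec ℚ x = castVec ℚ (A ^ k *ᵥ x) :=
  (castVec_pow_mulVec ℚ A k x).symm

theorem Aq_pow_mulVec_mem_range_of_le {v : Fin n → ℚ} {k l : ℕ} (hkl : k ≤ l)
    (hv : Aq A ^ k *ᵥ v ∈ (castVec ℚ : (Fin n → ℤ) →+ _).range) :
    Aq A ^ l *ᵥ v ∈ (castVec ℚ : (Fin n → ℤ) →+ _).range := by
  obtain ⟨x, hx⟩ := hv
  refine ⟨A ^ (l - k) *ᵥ x, ?_⟩
  rw [← Aq_pow_mulVec_castVec, hx, mulVec_mulVec, ← pow_add, Nat.sub_add_cancel hkl]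

/-- The group `G_A` of the vectors moved into `ℤ ^ n` by some power of `A`. It agrees with `GA A`
when `A` is non-singular, but is a subgroup for every `A`. -/
def groupGA : AddSubgroup (Fin n → ℚ) where
  carrier := {v | ∃ k : ℕ, Aq A ^ k *ᵥ v ∈ (castVec ℚ : (Fin n → ℤ) →+ _).range}
  zero_mem' := ⟨0, by simp⟩
  add_mem' := by
    rintro v w ⟨k, hv⟩ ⟨l, hw⟩
    refine ⟨max k l, ?_⟩
    rw [mulVec_add]
    exact add_mem (Aq_pow_mulVec_mem_range_of_le A (le_max_left k l) hv)
      (Aq_pow_mulVec_mem_range_of_le A (le_max_right k l) hw)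
  neg_mem' := by
    rintro v ⟨k, hv⟩
    exact ⟨k, by rw [mulVec_neg]; exact neg_mem hv⟩

theorem coe_groupGA {A : Matrix (Fin n) (Fin n) ℤ} (hA : A.det ≠ 0) :
    (groupGA A : Set (Fin n → ℚ)) = GA A := by
  have hunit := isUnit_det_Aq hA
  ext v
  constructor
  · rintro ⟨k, x, hx⟩
    refine ⟨-k, x, ?_⟩
    change v = _ *ᵥ castVec ℚ x
    rw [hx, mulVec_mulVec, ← zpow_natCast, ← Matrix.zpow_add hunit, neg_add_cancel, zpow_zero,
      one_mulVec]
  · rintro ⟨k, x, rfl⟩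
    change ∃ l : ℕ, _ *ᵥ (_ *ᵥ castVec ℚ x) ∈ _
    obtain ⟨l, rfl | rfl⟩ := k.eq_nat_or_neg
    · refine ⟨0, A ^ l *ᵥ x, ?_⟩
      rw [← Aq_pow_mulVec_castVec, pow_zero, one_mulVec, zpow_natCast]
    · refine ⟨l, x, ?_⟩
      rw [mulVec_mulVec, ← zpow_natCast, ← Matrix.zpow_add hunit, add_neg_cancel, zpow_zero,
        one_mulVec]

theorem castVec_mem_groupGA (x : Fin n → ℤ) : castVec ℚ x ∈ groupGA A :=
  ⟨0, x, by simp⟩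

theorem Aq_pow_mulVec_mem_groupGA_iff {k : ℕ} {v : Fin n → ℚ} :
    Aq A ^ k *ᵥ v ∈ groupGA A ↔ v ∈ groupGA A := by
  constructor
  · rintro ⟨l, hl⟩
    exact ⟨l + k, by rwa [pow_add, ← mulVec_mulVec]⟩
  · rintro ⟨l, hl⟩
    refine ⟨l, ?_⟩
    rw [mulVec_mulVec, ← pow_add]
    exact Aq_pow_mulVec_mem_range_of_le A (Nat.le_add_right l k) hl

/-- The operator induced by `A` on `(ℤ / N) ^ n`. -/
def modEnd (N : ℕ) : End (ZMod N) (Fin n → ZMod N) :=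
  (A.map (Int.castRingHom (ZMod N))).toLin'

theorem modEnd_pow_castVec (N k : ℕ) (x : Fin n → ℤ) :
    (modEnd A N ^ k) (castVec (ZMod N) x) = castVec (ZMod N) (A ^ k *ᵥ x) := by
  rw [castVec_pow_mulVec, modEnd, ← Matrix.toLin'_pow, Matrix.toLin'_apply]

theorem castVec_mem_nsmul_groupGA_iff {N : ℕ} (hN : N ≠ 0) {x : Fin n → ℤ} :
    castVec ℚ x ∈ N • groupGA A ↔ castVec (ZMod N) x ∈ (modEnd A N).maxGenEigenspace 0 := by
  have hpow (k : ℕ) : Aq A ^ k *ᵥ ((N : ℚ)⁻¹ • castVec ℚ x) ∈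
      (castVec ℚ : (Fin n → ℤ) →+ _).range ↔ (modEnd A N ^ k) (castVec (ZMod N) x) = 0 := by
    rw [mulVec_smul, Aq_pow_mulVec_castVec, inv_smul_castVec_mem_range_iff hN, modEnd_pow_castVec]
  simp only [mem_nsmul_addSubgroup_iff _ hN, End.mem_maxGenEigenspace, zero_smul, sub_zero, ← hpow]
  rfl

theorem groupGA_eq_range_sup_nsmul {N : ℕ} (hN : N ≠ 0) :
    groupGA A = (castVec ℚ : (Fin n → ℤ) →+ _).range ⊔ N • groupGA A := by
  have : NeZero N := ⟨hN⟩
  refine le_antisymm ?_ (sup_le ?_ (nsmul_addSubgroup_le _ N))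
  · rintro v ⟨k, x, hx⟩
    obtain ⟨u, hu⟩ :=
      exists_sub_pow_apply_mem_maxGenEigenspace_zero (modEnd A N) k (castVec (ZMod N) x)
    obtain ⟨w, rfl⟩ := castVec_zmod_surjective N u
    rw [modEnd_pow_castVec, ← map_sub, ← castVec_mem_nsmul_groupGA_iff A hN, map_sub,
      ← Aq_pow_mulVec_castVec, hx, ← mulVec_sub, mem_nsmul_addSubgroup_iff _ hN, ← mulVec_smul,
      Aq_pow_mulVec_mem_groupGA_iff, ← mem_nsmul_addSubgroup_iff _ hN] at hu
    exact AddSubgroup.mem_sup.2 ⟨castVec ℚ w, ⟨w, rfl⟩, v - castVec ℚ w, hu, add_sub_cancel _ _⟩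
  · rintro _ ⟨x, rfl⟩
    exact castVec_mem_groupGA A x

theorem nsmulIndex_groupGA {N : ℕ} (hN : N ≠ 0) :
    nsmulIndex (groupGA A) N = ((modEnd A N).maxGenEigenspace 0).toAddSubgroup.index := by
  have hcomap : (N • groupGA A).comap (castVec ℚ) =
      ((modEnd A N).maxGenEigenspace 0).toAddSubgroup.comap (castVec (ZMod N)) := by
    ext x
    exact castVec_mem_nsmul_groupGA_iff A hN
  calc nsmulIndex (groupGA A) N
    _ = (N • groupGA A).relIndex ((castVec ℚ : (Fin n → ℤ) →+ _).range ⊔ N • groupGA A) :=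
        congrArg _ (groupGA_eq_range_sup_nsmul A hN)
    _ = ((N • groupGA A).comap (castVec ℚ : (Fin n → ℤ) →+ _)).index := by
        rw [AddSubgroup.relIndex_sup_right, AddSubgroup.index_comap]
    _ = ((modEnd A N).maxGenEigenspace 0).toAddSubgroup.index := by
        rw [hcomap, AddSubgroup.index_comap_of_surjective _ (castVec_zmod_surjective N)]

theorem nsmulIndex_groupGA_ne_zero (N : ℕ) (hN : N ≠ 0) : nsmulIndex (groupGA A) N ≠ 0 := by
  have : NeZero N := ⟨hN⟩
  rw [nsmulIndex_groupGA A hN]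
  exact AddSubgroup.index_ne_zero_of_finite (hH := Quotient.finite _)

theorem finrank_maxGenEigenspace_modEnd (p : ℕ) [Fact p.Prime] :
    finrank (ZMod p) ((modEnd A p).maxGenEigenspace 0) = tp A p := by
  rw [LinearMap.finrank_maxGenEigenspace_zero_eq, tp, rootMultiplicity_eq_natTrailingDegree',
    ← Matrix.charpoly_map, modEnd, Matrix.charpoly_toLin']

theorem tp_le {p : ℕ} (hp : p.Prime) : tp A p ≤ n := by
  have : Fact p.Prime := ⟨hp⟩
  rw [← finrank_maxGenEigenspace_modEnd]
  simpa using Submodule.finrank_le ((modEnd A p).maxGenEigenspace 0)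

theorem nsmulIndex_groupGA_prime {p : ℕ} (hp : p.Prime) :
    nsmulIndex (groupGA A) p = p ^ (n - tp A p) := by
  have : Fact p.Prime := ⟨hp⟩
  have hquot : finrank (ZMod p) ((Fin n → ZMod p) ⧸ (modEnd A p).maxGenEigenspace 0) =
      n - tp A p := by
    rw [Submodule.finrank_quotient, finrank_fin_fun, finrank_maxGenEigenspace_modEnd]
  rw [nsmulIndex_groupGA A hp.ne_zero]
  change Nat.card ((Fin n → ZMod p) ⧸ (modEnd A p).maxGenEigenspace 0) = _
  rw [natCard_eq_pow_finrank (K := ZMod p), Nat.card_zmod, hquot]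

end GroupOfMatrix

section EndomorphismRing

/-- The ring of the matrices that map a subgroup `G` of `R ^ ι` into itself. -/
def matrixEnd {ι R : Type*} [Fintype ι] [DecidableEq ι] [Ring R] (G : AddSubgroup (ι → R)) :
    Subring (Matrix ι ι R) where
  carrier := {T | ∀ v ∈ G, T *ᵥ v ∈ G}
  mul_mem' hS hT v hv := by
    rw [← mulVec_mulVec]
    exact hS _ (hT v hv)
  one_mem' v hv := by rwa [one_mulVec]
  add_mem' hS hT v hv := by
    rw [add_mulVec]
    exact add_mem (hS v hv) (hT v hv)
  zero_mem' v _ := by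
    rw [zero_mulVec]
    exact zero_mem G
  neg_mem' hT v hv := by
    rw [neg_mulVec]
    exact neg_mem (hT v hv)

variable {n : ℕ} {A M : Matrix (Fin n) (Fin n) ℤ} {T : Matrix (Fin n) (Fin n) ℚ}

/-- The ring `ℤ[A, A⁻¹]`. -/
def laurentRing (A : Matrix (Fin n) (Fin n) ℤ) : Subring (Matrix (Fin n) (Fin n) ℚ) :=
  Subring.closure {Aq A, (Aq A)⁻¹}

theorem Aq_mem_laurentRing : Aq A ∈ laurentRing A :=
  Subring.subset_closure (by simp)

theorem Aq_inv_mem_laurentRing : (Aq A)⁻¹ ∈ laurentRing A :=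
  Subring.subset_closure (by simp)

theorem Aq_mem_matrixEnd : Aq A ∈ matrixEnd (groupGA A) := fun v hv => by
  simpa using (Aq_pow_mulVec_mem_groupGA_iff A (k := 1)).2 hv

theorem Aq_inv_mem_matrixEnd (hA : A.det ≠ 0) : (Aq A)⁻¹ ∈ matrixEnd (groupGA A) := fun v hv => by
  rw [← Aq_pow_mulVec_mem_groupGA_iff A (k := 1), mulVec_mulVec, pow_one,
    Matrix.mul_nonsing_inv _ (isUnit_det_Aq hA), one_mulVec]
  exact hv

theorem laurentRing_le_matrixEnd (hA : A.det ≠ 0) : laurentRing A ≤ matrixEnd (groupGA A) :=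
  Subring.closure_le.2 (Set.pair_subset Aq_mem_matrixEnd (Aq_inv_mem_matrixEnd hA))

theorem Aq_injective :
    Function.Injective (Aq : Matrix (Fin n) (Fin n) ℤ → Matrix (Fin n) (Fin n) ℚ) :=
  Matrix.map_injective Int.cast_injective

theorem Aq_mul (A B : Matrix (Fin n) (Fin n) ℤ) : Aq (A * B) = Aq A * Aq B :=
  Matrix.map_mul (f := Int.castRingHom ℚ)

theorem commute_Aq_iff : Commute (Aq M) (Aq A) ↔ Commute M A := by
  rw [commute_iff_eq, commute_iff_eq, ← Aq_mul, ← Aq_mul, Aq_injective.eq_iff]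

theorem Aq_mem_matrixEnd_of_commute (hM : Commute M A) : Aq M ∈ matrixEnd (groupGA A) := by
  rintro v ⟨k, x, hx⟩
  refine ⟨k, M *ᵥ x, ?_⟩
  rw [mulVec_mulVec, ← ((commute_Aq_iff.2 hM).pow_right k).eq, ← mulVec_mulVec, ← hx]
  simpa using (Aq_pow_mulVec_castVec M 1 x).symm

theorem exists_pow_mulVec_mem_range {ι : Type*} [Finite ι] {v : ι → Fin n → ℚ}
    (hv : ∀ i, v i ∈ groupGA A) :
    ∃ k : ℕ, ∀ i, Aq A ^ k *ᵥ v i ∈ (castVec ℚ : (Fin n → ℤ) →+ _).range := by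
  choose k hk using hv
  obtain ⟨m, hm⟩ := Finite.exists_le k
  exact ⟨m, fun i => Aq_pow_mulVec_mem_range_of_le A (hm i) (hk i)⟩

theorem exists_pow_mul_eq_Aq (hT : T ∈ matrixEnd (groupGA A)) : ∃ k M, Aq A ^ k * T = Aq M := by
  have hcol (j : Fin n) : T.col j ∈ groupGA A := by
    have hsingle : castVec ℚ (Pi.single j 1) = Pi.single j (1 : ℚ) := by
      ext i
      simp [castVec_apply, Pi.single_apply]
    rw [← Matrix.mulVec_single_one, ← hsingle]
    exact hT _ (castVec_mem_groupGA A _)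
  obtain ⟨k, hk⟩ := exists_pow_mulVec_mem_range hcol
  choose x hx using hk
  refine ⟨k, Matrix.of fun i j => x j i, ?_⟩
  ext i j
  exact (congrFun (hx j) i).symm

theorem exists_eq_inv_pow_mul (hA : A.det ≠ 0) (hT : T ∈ matrixEnd (groupGA A))
    (hcomm : Commute T (Aq A)) : ∃ k M, Commute M A ∧ T = (Aq A)⁻¹ ^ k * Aq M := by
  obtain ⟨k, M, hM⟩ := exists_pow_mul_eq_Aq hT
  refine ⟨k, M, ?_, ?_⟩
  · rw [← commute_Aq_iff, ← hM]
    exact ((Commute.refl _).pow_left k).mul_left hcomm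
  · rw [← hM, Matrix.inv_pow', Matrix.nonsing_inv_mul_cancel_left]
    rw [Matrix.det_pow]
    exact (isUnit_det_Aq hA).pow k

theorem charpoly_toLin'_Aq (A : Matrix (Fin n) (Fin n) ℤ) :
    (toLin' (Aq A)).charpoly = A.charpoly.map (Int.castRingHom ℚ) :=
  (Matrix.charpoly_toLin' _).trans (Matrix.charpoly_map A (Int.castRingHom ℚ))

theorem commute_of_mem_matrixEnd (hirr : Irreducible (A.charpoly.map (Int.castRingHom ℚ)))
    (hcop : ∀ m, m ∣ n → (∀ p, p.Prime → m ∣ tp A p) → m = 1)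
    (hT : T ∈ matrixEnd (groupGA A)) : Commute T (Aq A) := by
  rw [← charpoly_toLin'_Aq] at hirr
  have hmem {S : Matrix (Fin n) (Fin n) ℚ} (hS : S ∈ matrixEnd (groupGA A)) :
      toLin' S ∈ quasiEnd (groupGA A) :=
    mem_quasiEnd_of_mapsTo hS
  have : IsSimpleModule (quasiEnd (groupGA A)) (Fin n → ℚ) :=
    isSimpleModule_of_irreducible_charpoly hirr (hmem Aq_mem_matrixEnd)
  have hdvd : finrank (End (quasiEnd (groupGA A)) (Fin n → ℚ)) (Fin n → ℚ) ∣ n := by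
    simpa using finrank_end_dvd_finrank (quasiEnd (groupGA A))
  have hdim : finrank (End (quasiEnd (groupGA A)) (Fin n → ℚ)) (Fin n → ℚ) = 1 :=
    hcop _ hdvd fun p hp => (Nat.dvd_sub_iff_right (tp_le A hp) hdvd).1 <|
      finrank_end_quasiEnd_dvd _ (nsmulIndex_groupGA_ne_zero A) hp (nsmulIndex_groupGA_prime A hp)
  have hcomm := commute_of_finrank_end_eq_one hdim
    (commute_end_of_irreducible_charpoly hirr (hmem Aq_mem_matrixEnd)) (hmem hT)
    (hmem Aq_mem_matrixEnd)
  apply Matrix.toLin'.injective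
  rw [toLin'_mul, toLin'_mul]
  exact hcomm

theorem exists_finset_mem_span (hA : A.det ≠ 0)
    (hcomm : ∀ T ∈ matrixEnd (groupGA A), Commute T (Aq A)) :
    ∃ s : Finset (Matrix (Fin n) (Fin n) ℚ),
      (s : Set (Matrix (Fin n) (Fin n) ℚ)) ⊆ (matrixEnd (groupGA A) : Set _) ∧
      ∀ T ∈ matrixEnd (groupGA A),
        T ∈ Submodule.span (laurentRing A) (s : Set (Matrix (Fin n) (Fin n) ℚ)) := by
  let C : Submodule ℤ (Matrix (Fin n) (Fin n) ℚ) :=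
    (Subalgebra.centralizer ℤ {A}).toSubmodule.map
      (Int.castRingHom ℚ).mapMatrix.toIntAlgHom.toLinearMap
  obtain ⟨s, hs⟩ : C.FG := (IsNoetherian.noetherian _).map _
  refine ⟨s, fun S hS => ?_, fun T hT => ?_⟩
  · obtain ⟨M, hM, rfl⟩ : S ∈ C := hs ▸ Submodule.subset_span hS
    exact Aq_mem_matrixEnd_of_commute ((Subalgebra.mem_centralizer_iff ℤ).1 hM A rfl).symm
  · obtain ⟨k, M, hM, rfl⟩ := exists_eq_inv_pow_mul hA hT (hcomm T hT)
    have hMC : Aq M ∈ C := by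
      refine ⟨M, (Subalgebra.mem_centralizer_iff ℤ).2 ?_, rfl⟩
      rintro _ rfl
      exact hM.symm
    rw [← hs] at hMC
    exact Submodule.smul_mem _ (⟨_, pow_mem Aq_inv_mem_laurentRing k⟩ : laurentRing A)
      (Submodule.span_le_restrictScalars ℤ (laurentRing A) _ hMC)

theorem Aq_mem_adjoin_of_commute (hirr : Irreducible (A.charpoly.map (Int.castRingHom ℚ)))
    (hM : Commute M A) : Aq M ∈ Algebra.adjoin ℚ {Aq A} := by
  rw [← charpoly_toLin'_Aq] at hirr
  have hmem := mem_adjoin_singleton_of_commute hirr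
    ((commute_Aq_iff.2 hM).map (Matrix.toLinAlgEquiv' (R := ℚ)))
  change Matrix.toLinAlgEquiv' (Aq M) ∈ Algebra.adjoin ℚ {Matrix.toLinAlgEquiv' (Aq A)} at hmem
  rw [Algebra.adjoin_singleton_eq_range_aeval] at hmem ⊢
  obtain ⟨q, hq⟩ := hmem
  refine ⟨q, Matrix.toLinAlgEquiv'.injective ?_⟩
  exact (aeval_algHom_apply Matrix.toLinAlgEquiv' (Aq A) q).symm.trans hq

theorem isIntegral_Aq (M : Matrix (Fin n) (Fin n) ℤ) : IsIntegral ℤ (Aq M) :=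
  map_isIntegral_int (Int.castRingHom ℚ).mapMatrix (Matrix.isIntegral M)

theorem matrixEnd_groupGA_eq_laurentRing (hA : A.det ≠ 0)
    (hirr : Irreducible (A.charpoly.map (Int.castRingHom ℚ)))
    (hcomm : ∀ T ∈ matrixEnd (groupGA A), Commute T (Aq A))
    {K : Type*} [Ring K] [Nontrivial K] [Algebra ℚ K] {lam : K}
    (hroot : aeval lam (A.charpoly.map (Int.castRingHom ℚ)) = 0)
    (hclosed : ∀ x : K, IsIntegral ℤ x → x ∈ Algebra.adjoin ℤ {lam}) :
    matrixEnd (groupGA A) = laurentRing A := by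
  have hcharpoly : aeval (Aq A) (A.charpoly.map (Int.castRingHom ℚ)) = 0 := by
    rw [← Matrix.charpoly_map]
    exact Matrix.aeval_self_charpoly (Aq A)
  have : Nonempty (Fin n) := by
    rw [← Fintype.card_pos_iff, ← A.charpoly_natDegree_eq_dim,
      ← A.charpoly_monic.natDegree_map (Int.castRingHom ℚ)]
    exact hirr.natDegree_pos
  have hadjoin : Algebra.adjoin ℤ {Aq A} ≤ subalgebraOfSubring (laurentRing A) :=
    Algebra.adjoin_le (Set.singleton_subset_iff.2 Aq_mem_laurentRing)
  refine le_antisymm (fun T hT => ?_) (laurentRing_le_matrixEnd hA)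
  obtain ⟨k, M, hM, rfl⟩ := exists_eq_inv_pow_mul hA hT (hcomm T hT)
  have hMint : Aq M ∈ Algebra.adjoin ℤ {Aq A} :=
    mem_adjoin_singleton_of_isIntegral hirr hcharpoly hroot hclosed
      (Aq_mem_adjoin_of_commute hirr hM) (isIntegral_Aq M)
  exact mul_mem (pow_mem Aq_inv_mem_laurentRing k) (hadjoin hMint)

end EndomorphismRing

theorem stmt10_general (n : ℕ) (A : Matrix (Fin n) (Fin n) ℤ) (hA : A.det ≠ 0)
    (hirr : Irreducible (A.charpoly.map (Int.castRingHom ℚ)))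
    (hcop : ∀ m, m ∣ n → (∀ p, p.Prime → m ∣ tp A p) → m = 1)
    (K : Type*) [Ring K] [Nontrivial K] [Algebra ℚ K] (lam : K)
    (hroot : Polynomial.aeval lam (A.charpoly.map (Int.castRingHom ℚ)) = 0) :
    ((∃ s : Finset (Matrix (Fin n) (Fin n) ℚ),
        (↑s : Set (Matrix (Fin n) (Fin n) ℚ)) ⊆ {T | ∀ v ∈ GA A, T *ᵥ v ∈ GA A} ∧
        ∀ T : Matrix (Fin n) (Fin n) ℚ, (∀ v ∈ GA A, T *ᵥ v ∈ GA A) →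
          ∃ c : Matrix (Fin n) (Fin n) ℚ → Matrix (Fin n) (Fin n) ℚ,
            (∀ m ∈ s, c m ∈ Subring.closure ({Aq A, (Aq A)⁻¹} : Set (Matrix (Fin n) (Fin n) ℚ))) ∧
            T = ∑ m ∈ s, c m * m) ∧
      ((∀ x : K, IsIntegral ℤ x → x ∈ Algebra.adjoin ℤ ({lam} : Set K)) →
        {T : Matrix (Fin n) (Fin n) ℚ | ∀ v ∈ GA A, T *ᵥ v ∈ GA A} =
          (Subring.closure ({Aq A, (Aq A)⁻¹} : Set (Matrix (Fin n) (Fin n) ℚ)) :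
            Set (Matrix (Fin n) (Fin n) ℚ)))) := by
  have hcomm (T) (hT : T ∈ matrixEnd (groupGA A)) : Commute T (Aq A) :=
    commute_of_mem_matrixEnd hirr hcop hT
  rw [← coe_groupGA hA]
  constructor
  · obtain ⟨s, hsub, hspan⟩ := exists_finset_mem_span hA hcomm
    refine ⟨s, hsub, fun T hT => ?_⟩
    obtain ⟨c, -, hc⟩ := Submodule.mem_span_finset.1 (hspan T hT)
    exact ⟨fun m => c m, fun m _ => (c m).2, hc.symm⟩
  · intro hclosed
    exact congrArg SetLike.coe (matrixEnd_groupGA_eq_laurentRing hA hirr hcomm hroot hclosed)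

/-- `End(G_A)` is a finitely generated module over `ℤ[A, A⁻¹]`, and if
`O_K = ℤ[λ]` then `End(G_A) = ℤ[A, A⁻¹]`. -/
theorem stmt10 (n : ℕ) (A : Matrix (Fin n) (Fin n) ℤ) (hA : A.det ≠ 0)
    (hirr : Irreducible (A.charpoly.map (Int.castRingHom ℚ)))
    (hP' : (Pbad A).Nonempty)
    (hcop : ∃ p : ℕ, p.Prime ∧ Nat.gcd n (tp A p) = 1)
    (K : Type) [Field K] [NumberField K] (lam : K)
    (hint : IsIntegral ℤ lam)
    (hroot : Polynomial.aeval lam (A.charpoly.map (Int.castRingHom ℚ)) = 0)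
    (hgenK : Algebra.adjoin ℚ ({lam} : Set K) = ⊤) :
    ((∃ s : Finset (Matrix (Fin n) (Fin n) ℚ),
        (↑s : Set (Matrix (Fin n) (Fin n) ℚ)) ⊆ {T | ∀ v ∈ GA A, T *ᵥ v ∈ GA A} ∧
        ∀ T : Matrix (Fin n) (Fin n) ℚ, (∀ v ∈ GA A, T *ᵥ v ∈ GA A) →
          ∃ c : Matrix (Fin n) (Fin n) ℚ → Matrix (Fin n) (Fin n) ℚ,
            (∀ m ∈ s, c m ∈ Subring.closure ({Aq A, (Aq A)⁻¹} : Set (Matrix (Fin n) (Fin n) ℚ))) ∧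
            T = ∑ m ∈ s, c m * m) ∧
      ((∀ x : K, IsIntegral ℤ x → x ∈ Algebra.adjoin ℤ ({lam} : Set K)) →
        {T : Matrix (Fin n) (Fin n) ℚ | ∀ v ∈ GA A, T *ᵥ v ∈ GA A} =
          (Subring.closure ({Aq A, (Aq A)⁻¹} : Set (Matrix (Fin n) (Fin n) ℚ)) :
            Set (Matrix (Fin n) (Fin n) ℚ)))) := by
  obtain ⟨p, hp, hgcd⟩ := hcop
  exact stmt10_general n A hA hirr
    (fun m hn ht => Nat.dvd_one.1 (hgcd ▸ Nat.dvd_gcd hn (ht p hp))) K lam hroot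
end
end

section
/- Let A ∈ M_n(ℤ) be non-singular with h_A irreducible over ℚ and P'(A) ≠ ∅, and assume there exists a prime p with gcd(n, t_p) = 1. Define N⃗(X_A) = {T ∈ M_n(ℤ) : det T = ±1 and for every m ∈ ℕ there exists k ∈ ℕ with A^{-m}·T·A^{k} ∈ M_n(ℤ) (products computed in M_n(ℚ))}. Then N⃗(X_A) equals the centralizer of A in GL_n(ℤ), i.e., N⃗(X_A) = {T ∈ M_n(ℤ) : det T = ±1 and T·A = A·T}. In particular, N⃗(X_A) is a group under matrix multiplication, it is commutative and finitely generated, and if n = 2 and h_A has no real roots then N⃗(X_A) is finite. -/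
open Matrix Polynomial

noncomputable section

/-- Membership in the linear representation group `N⃗(X_A)`:
`det T = ±1` and for every `m` there is a `k` with `A⁻ᵐ T Aᵏ ∈ M_n(ℤ)`. -/
def Ncond {n : ℕ} (A T : Matrix (Fin n) (Fin n) ℤ) : Prop :=
  (T.det = 1 ∨ T.det = -1) ∧
    ∀ m : ℕ, ∃ k : ℕ, ∀ i j, ∃ z : ℤ,
      (((Aq A)⁻¹ ^ m * T.map (Int.cast : ℤ → ℚ) * (Aq A) ^ k) i j) = (z : ℚ)

/-!
If `T * A ^ k ∈ A ^ m M_n(ℤ)` for every `m` and some `k` depending on `m`, and `P` is a maximal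
ideal of the ring of integers of the splitting field of `h_A` containing the eigenvalue `y` but not
the eigenvalue `x`, then the component of `T` from the `x`-eigenspace to the `y`-eigenspace is
divisible by every power of `P`, so it vanishes by Krull's intersection theorem. Hence `T` commutes
with `A` as soon as any two eigenvalues are separated by such an ideal, in both orders.

Declaring `x ≤ y` when every maximal ideal containing `x` contains `y` preorders the eigenvalues,
invariantly under the transitive action of the Galois group. In such a finite preorder, all the sets
`Set.Ici x` have the same size and partition every upper set; so this size divides `n` and, since
the eigenvalues lying in a prime above `p` form an upper set with `t_p` elements, every `t_p`.
Coprimality therefore makes the preorder trivial.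

Over `ℚ` the centralizer of `A` is the field `ℚ[x] / (h_A)`, so the integral centralizer embeds in
its ring of integers, and Dirichlet's unit theorem applies.
-/

section InvariantPreorder

open scoped Pointwise

variable {G Ω : Type*} [Group G] [MulAction G Ω] [Preorder Ω]

theorem Ici_smul_of_monotone (hG : ∀ g : G, Monotone (g • · : Ω → Ω)) (g : G) (x : Ω) :
    Set.Ici (g • x) = g • Set.Ici x := by
  ext y
  rw [Set.mem_smul_set_iff_inv_smul_mem, Set.mem_Ici, Set.mem_Ici]
  exact ⟨fun h => by simpa using hG g⁻¹ h, fun h => by simpa using hG g h⟩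

variable [MulAction.IsPretransitive G Ω]

theorem ncard_Ici_eq_ncard_Ici (hG : ∀ g : G, Monotone (g • · : Ω → Ω)) (x y : Ω) :
    (Set.Ici x).ncard = (Set.Ici y).ncard := by
  obtain ⟨g, rfl⟩ := MulAction.exists_smul_eq G x y
  rw [Ici_smul_of_monotone hG, Set.ncard_smul_set]

variable [Finite Ω]

theorem Ici_eq_Ici_of_le (hG : ∀ g : G, Monotone (g • · : Ω → Ω)) {x y : Ω} (hxy : x ≤ y) :
    Set.Ici y = Set.Ici x :=
  Set.eq_of_subset_of_ncard_le (Set.Ici_subset_Ici.2 hxy) (ncard_Ici_eq_ncard_Ici hG x y).le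

theorem ncard_Ici_dvd_ncard_of_isUpperSet (hG : ∀ g : G, Monotone (g • · : Ω → Ω)) (x : Ω)
    {S : Set Ω} (hS : IsUpperSet S) : (Set.Ici x).ncard ∣ S.ncard := by
  classical
  have := Fintype.ofFinite Ω
  rw [Set.ncard_eq_toFinset_card' S, Finset.card_eq_sum_card_image (Set.Ici : Ω → Set Ω)]
  apply Finset.dvd_sum
  intro C hC
  obtain ⟨y, hy, rfl⟩ := Finset.mem_image.1 hC
  have hfiber : ((S.toFinset.filter (Set.Ici · = Set.Ici y) : Finset Ω) : Set Ω) = Set.Ici y := by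
    ext z
    simp only [Finset.coe_filter, Set.mem_toFinset, Set.mem_ofPred_eq]
    exact ⟨fun hz => hz.2 ▸ Set.self_mem_Ici,
      fun hz => ⟨hS hz (Set.mem_toFinset.1 hy), Ici_eq_Ici_of_le hG hz⟩⟩
  rw [← Set.ncard_coe_finset, hfiber, ncard_Ici_eq_ncard_Ici hG x y]

end InvariantPreorder

section Separation

variable {G R S : Type*} [Group G] [CommRing R] [IsDomain R] [MulSemiringAction G R]
  [CommRing S] [Algebra S R] [SMulCommClass G S R]

variable (G) in
theorem exists_isMaximal_mem_notMem_of_rootSet {f : S[X]}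
    [MulAction.IsPretransitive G (f.rootSet R)]
    (hf : ∀ d : ℕ, d ∣ (f.rootSet R).ncard →
      (∀ P : Ideal R, P.IsMaximal → d ∣ (f.rootSet R ∩ P).ncard) → d = 1)
    {x y : R} (hx : x ∈ f.rootSet R) (hy : y ∈ f.rootSet R) (hxy : x ≠ y) :
    ∃ P : Ideal R, P.IsMaximal ∧ x ∈ P ∧ y ∉ P := by
  let _ : Preorder (f.rootSet R) :=
    Preorder.lift fun z => {P : Ideal R | P.IsMaximal ∧ (z : R) ∈ P}
  have hG (g : G) : Monotone (g • · : f.rootSet R → f.rootSet R) := fun a b hab P hP =>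
    ⟨hP.1, (hab (a := P.comap (MulSemiringAction.toRingEquiv G R g))
      ⟨haveI := hP.1; Ideal.comap_isMaximal_of_equiv _, hP.2⟩).2⟩
  have hdvd {U : Set (f.rootSet R)} (hU : IsUpperSet U) :=
    ncard_Ici_dvd_ncard_of_isUpperSet hG ⟨x, hx⟩ hU
  have hone : (Set.Ici (⟨x, hx⟩ : f.rootSet R)).ncard = 1 := by
    refine hf _ ?_ fun P hP => ?_
    · rw [← Nat.card_coe_set_eq (f.rootSet R), ← Set.ncard_univ]
      exact hdvd isUpperSet_univ
    · rw [← Subtype.image_preimage_coe, Set.ncard_image_of_injective _ Subtype.val_injective]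
      exact hdvd fun a b hab ha => (hab ⟨hP, ha⟩).2
  have hnle : ¬ (⟨x, hx⟩ : f.rootSet R) ≤ ⟨y, hy⟩ := fun hle =>
    hxy <| congrArg Subtype.val <|
      (Set.ncard_le_one (Set.toFinite _)).1 hone.le _ Set.self_mem_Ici _ hle
  obtain ⟨P, ⟨hP, hxP⟩, hyP⟩ := Set.not_subset.1 hnle
  exact ⟨P, hP, hxP, fun h => hyP ⟨hP, h⟩⟩

end Separation

section RootReduction

variable {R : Type*} [CommRing R]

theorem rootMultiplicity_zero_map_quotient (f : ℤ[X]) {p : ℕ} (hp : p.Prime) (P : Ideal R)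
    [P.IsPrime] (hpP : (p : R) ∈ P) :
    ((f.map (algebraMap ℤ R)).map (Ideal.Quotient.mk P)).rootMultiplicity 0 =
      (f.map (Int.castRingHom (ZMod p))).rootMultiplicity 0 := by
  have := Fact.mk hp
  have : CharP (R ⧸ P) p := (CharP.charP_iff_prime_eq_zero hp).2 <| by
    rwa [← map_natCast (Ideal.Quotient.mk P), Ideal.Quotient.eq_zero_iff_mem]
  let i : ZMod p →+* R ⧸ P := ZMod.castHom dvd_rfl (R ⧸ P)
  rw [eq_rootMultiplicity_map i.injective 0, map_zero, Polynomial.map_map, Polynomial.map_map]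
  congr 2
  exact RingHom.ext_int _ _

variable (R) in
theorem exists_isMaximal_natCast_mem [CharZero R] [Algebra.IsIntegral ℤ R] {p : ℕ}
    (hp : p.Prime) : ∃ P : Ideal R, P.IsMaximal ∧ (p : R) ∈ P := by
  have : (Ideal.span {(p : ℤ)}).IsMaximal :=
    PrincipalIdealRing.isMaximal_of_irreducible (Nat.prime_iff_prime_int.1 hp).irreducible
  obtain ⟨P, hP, hPp⟩ :=
    Ideal.exists_maximal_ideal_liesOver_of_isIntegral (S := R) (Ideal.span {(p : ℤ)})
  refine ⟨P, hP, ?_⟩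
  have hmem : algebraMap ℤ R p ∈ P :=
    (Ideal.mem_of_liesOver P (Ideal.span {(p : ℤ)}) _).1 (Ideal.mem_span_singleton_self _)
  simpa using hmem

variable [IsDomain R]

theorem ncard_rootSet_inter_eq_countP_aroots {S : Type*} [CommRing S] [Algebra S R] {f : S[X]}
    (hf : (f.aroots R).Nodup) (U : Set R) [DecidablePred (· ∈ U)] :
    (f.rootSet R ∩ U).ncard = (f.aroots R).countP (· ∈ U) := by
  classical
  have hcoe : f.rootSet R ∩ U = ((f.aroots R).filter (· ∈ U)).toFinset := by
    ext z
    simp [rootSet_def]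
  rw [hcoe, Set.ncard_coe_finset, Multiset.toFinset_card_of_nodup (hf.filter _),
    Multiset.countP_eq_card_filter]

theorem ncard_rootSet_eq_natDegree_of_splits {S : Type*} [CommRing S] [Algebra S R] {f : S[X]}
    (hf : f.Monic) (hs : (f.map (algebraMap S R)).Splits) (hn : (f.aroots R).Nodup) :
    (f.rootSet R).ncard = f.natDegree := by
  classical
  rw [rootSet_def, Set.ncard_coe_finset, Multiset.toFinset_card_of_nodup hn, aroots_def,
    ← hs.natDegree_eq_card_roots, hf.natDegree_map]

theorem countP_roots_mem_eq_rootMultiplicity {g : R[X]} (hg : g.Monic) (hs : g.Splits)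
    (P : Ideal R) [P.IsPrime] [DecidablePred (· ∈ P)] :
    g.roots.countP (· ∈ P) = (g.map (Ideal.Quotient.mk P)).rootMultiplicity 0 := by
  classical
  rw [← count_roots, hs.roots_map_of_ne_zero (hg.map _).ne_zero, Multiset.count_map,
    Multiset.countP_eq_card_filter]
  congr! 2 with z
  rw [eq_comm, Ideal.Quotient.eq_zero_iff_mem]

theorem ncard_rootSet_inter_ideal_eq_rootMultiplicity {f : ℤ[X]} (hf : f.Monic)
    (hs : (f.map (algebraMap ℤ R)).Splits) (hn : (f.aroots R).Nodup) {p : ℕ} (hp : p.Prime)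
    (P : Ideal R) [P.IsPrime] (hpP : (p : R) ∈ P) :
    (f.rootSet R ∩ P).ncard = (f.map (Int.castRingHom (ZMod p))).rootMultiplicity 0 := by
  classical
  rw [ncard_rootSet_inter_eq_countP_aroots hn, ← rootMultiplicity_zero_map_quotient f hp P hpP,
    ← countP_roots_mem_eq_rootMultiplicity (hf.map _) hs P]
  rfl

end RootReduction

section SplittingOverIntegers

open NumberField

theorem exists_numberField_normal_splits (f : ℚ[X]) :
    ∃ (K : Type) (_ : Field K) (_ : NumberField K),
      Normal ℚ K ∧ (f.map (algebraMap ℚ K)).Splits := by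
  have : IsSplittingField ℚ f.SplittingField f := .splittingField f
  have hfin := IsSplittingField.finiteDimensional f.SplittingField f
  exact ⟨f.SplittingField, inferInstance, { to_finiteDimensional := hfin },
    .of_isSplittingField f, IsSplittingField.splits _ f⟩

theorem nodup_aroots_of_irreducible_map {R : Type*} [CommRing R] [IsDomain R] [CharZero R]
    {f : ℤ[X]} (hf : Irreducible (f.map (Int.castRingHom ℚ))) : (f.aroots R).Nodup := by
  let L := FractionRing R
  have hL : (f.map (algebraMap ℤ R)).map (algebraMap R L) =
      (f.map (Int.castRingHom ℚ)).map (algebraMap ℚ L) := by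
    rw [Polynomial.map_map, Polynomial.map_map]
    congr 1
    exact RingHom.ext_int _ _
  have hroots : ((f.map (algebraMap ℤ R)).map (algebraMap R L)).roots.Nodup :=
    hL ▸ nodup_roots hf.separable.map
  exact (Multiset.nodup_of_le
    (map_roots_le_of_injective _ (IsFractionRing.injective R L)) hroots).of_map

variable {K : Type*} [Field K] {f : ℤ[X]}

theorem splits_map_ringOfIntegers (hf : f.Monic) (hs : (f.map (algebraMap ℤ K)).Splits) :
    (f.map (algebraMap ℤ (𝓞 K))).Splits := by
  have hmap : (f.map (algebraMap ℤ (𝓞 K))).map (algebraMap (𝓞 K) K) = f.map (algebraMap ℤ K) := by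
    rw [Polynomial.map_map, ← IsScalarTower.algebraMap_eq]
  refine .of_splits_map_of_injective RingOfIntegers.coe_injective (hmap ▸ hs) fun a ha => ?_
  have ha' : IsIntegral ℤ a := ⟨f, hf, by
    rw [hmap, mem_roots (hf.map _).ne_zero, IsRoot.def, eval_map] at ha
    exact ha⟩
  exact ⟨⟨a, ha'⟩, rfl⟩

theorem isPretransitive_rootSet_ringOfIntegers [CharZero K] [Normal ℚ K] (hf : f.Monic)
    (hirr : Irreducible (f.map (Int.castRingHom ℚ))) :
    MulAction.IsPretransitive Gal(K/ℚ) (f.rootSet (𝓞 K)) := by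
  have hminpoly (z : f.rootSet (𝓞 K)) :
      minpoly ℚ (algebraMap (𝓞 K) K z) = f.map (Int.castRingHom ℚ) := by
    refine (minpoly.eq_of_irreducible_of_monic hirr ?_ (hf.map _)).symm
    have hz : aeval (z : 𝓞 K) f = 0 := (mem_rootSet.1 z.2).2
    rw [aeval_def, eval₂_map, RingHom.ext_int ((algebraMap ℚ K).comp _) (algebraMap ℤ K),
      ← aeval_def, aeval_algebraMap_apply, hz, map_zero]
  refine ⟨fun x y => ?_⟩
  obtain ⟨g, hg⟩ := (Normal.minpoly_eq_iff_mem_orbit K).1 ((hminpoly y).trans (hminpoly x).symm)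
  exact ⟨g, Subtype.ext <| RingOfIntegers.coe_injective hg⟩

end SplittingOverIntegers

section SpectralCofactor

variable {ι R : Type*} [Fintype ι] [DecidableEq ι] [CommRing R]

/-- The value at `A` of `χ / (X - x)`, where `χ` is the characteristic polynomial of `A`. When `x`
is a simple root of `χ` in a field, this is a nonzero multiple of the projection onto the
`x`-eigenspace along the other generalized eigenspaces; it has the advantage of existing over any
commutative ring. -/
def spectralCofactor (A : Matrix ι ι R) (x : R) : Matrix ι ι R :=
  aeval A (A.charpoly /ₘ (X - C x))

theorem spectralCofactor_map {S : Type*} [CommRing S] (φ : R →+* S) (A : Matrix ι ι R) (x : R) :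
    spectralCofactor (φ.mapMatrix A) (φ x) = φ.mapMatrix (spectralCofactor A x) := by
  have hcomp : (algebraMap S (Matrix ι ι S)).comp φ =
      φ.mapMatrix.comp (algebraMap R (Matrix ι ι R)) := by
    ext a i j
    simp [Matrix.algebraMap_matrix_apply, apply_ite φ]
  rw [spectralCofactor, spectralCofactor, RingHom.mapMatrix_apply, charpoly_map,
    map_aeval_eq_aeval_map hcomp, map_divByMonic _ (monic_X_sub_C x), Polynomial.map_sub, map_X,
    map_C, RingHom.mapMatrix_apply]

variable {A : Matrix ι ι R} {x : R}

theorem mul_spectralCofactor (hx : A.charpoly.IsRoot x) :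
    A * spectralCofactor A x = x • spectralCofactor A x := by
  have h := congrArg (aeval A) (mul_divByMonic_eq_iff_isRoot.2 hx)
  rw [map_mul, aeval_self_charpoly, map_sub, aeval_X, aeval_C, sub_mul, sub_eq_zero,
    ← Algebra.smul_def] at h
  exact h

theorem spectralCofactor_mul (hx : A.charpoly.IsRoot x) :
    spectralCofactor A x * A = x • spectralCofactor A x := by
  rw [← mul_spectralCofactor hx, spectralCofactor]
  exact (Algebra.commute_of_mem_adjoin_self <| aeval_mem_adjoin_singleton R A).eq.symm

theorem pow_mul_spectralCofactor (hx : A.charpoly.IsRoot x) (k : ℕ) :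
    A ^ k * spectralCofactor A x = x ^ k • spectralCofactor A x := by
  induction k with
  | zero => simp
  | succ k ih => rw [pow_succ', mul_assoc, ih, mul_smul_comm, mul_spectralCofactor hx, smul_smul,
      pow_succ]

theorem spectralCofactor_mul_pow (hx : A.charpoly.IsRoot x) (k : ℕ) :
    spectralCofactor A x * A ^ k = x ^ k • spectralCofactor A x := by
  induction k with
  | zero => simp
  | succ k ih => rw [pow_succ, ← mul_assoc, ih, smul_mul_assoc, spectralCofactor_mul hx, smul_smul,
      pow_succ]

end SpectralCofactor

theorem exists_sum_C_mul_divByMonic_eq_one {K : Type*} [Field K] [DecidableEq K] {f : K[X]}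
    (hf : f.Monic) (hs : f.Splits) (hn : f.roots.Nodup) (hne : f ≠ 1) :
    ∃ c : K → K, ∑ x ∈ f.roots.toFinset, C (c x) * (f /ₘ (X - C x)) = 1 := by
  have hnodal : f = Lagrange.nodal f.roots.toFinset id := by
    conv_lhs => rw [hs.eq_prod_roots_of_monic hf]
    rw [Lagrange.nodal, Finset.prod, Multiset.toFinset_val, hn.dedup]
    rfl
  have hroots : f.roots.toFinset.Nonempty := by
    refine Multiset.toFinset_nonempty.2 fun h => hne ?_
    rw [hs.eq_prod_roots_of_monic hf, h, Multiset.map_zero, Multiset.prod_zero]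
  refine ⟨Lagrange.nodalWeight f.roots.toFinset id, ?_⟩
  rw [← Lagrange.sum_basis Function.injective_id.injOn hroots]
  refine Finset.sum_congr rfl fun x hx => ?_
  rw [Lagrange.basis_eq_prod_sub_inv_mul_nodal_div hx, ← hnodal, id,
    divByMonic_eq_div _ (monic_X_sub_C x)]

section Sandwich

variable {ι : Type*} [Fintype ι] [DecidableEq ι]

theorem exists_sum_smul_spectralCofactor_eq_one {K : Type*} [Field K] [DecidableEq K]
    {A : Matrix ι ι K} (hs : A.charpoly.Splits) (hn : A.charpoly.roots.Nodup) :
    ∃ c : K → K, ∑ x ∈ A.charpoly.roots.toFinset, c x • spectralCofactor A x = 1 := by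
  by_cases hone : A.charpoly = 1
  · have : IsEmpty ι := Fintype.card_eq_zero_iff.1 <| by
      rw [← A.charpoly_natDegree_eq_dim, hone, natDegree_one]
    exact ⟨0, Subsingleton.elim _ _⟩
  obtain ⟨c, hc⟩ := exists_sum_C_mul_divByMonic_eq_one A.charpoly_monic hs hn hone
  refine ⟨c, ?_⟩
  have h := congrArg (aeval A) hc
  simpa only [spectralCofactor, map_sum, map_mul, map_one, aeval_C, ← Algebra.smul_def] using h

theorem eq_zero_of_forall_spectralCofactor_mul_mul_eq_zero_of_field {K : Type*} [Field K]
    {A Z : Matrix ι ι K} (hs : A.charpoly.Splits) (hn : A.charpoly.roots.Nodup)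
    (hZ : ∀ x ∈ A.charpoly.roots, ∀ y ∈ A.charpoly.roots,
      spectralCofactor A y * Z * spectralCofactor A x = 0) : Z = 0 := by
  classical
  obtain ⟨c, hc⟩ := exists_sum_smul_spectralCofactor_eq_one hs hn
  rw [← one_mul Z, ← mul_one (1 * Z), ← hc, Finset.sum_mul, Finset.sum_mul]
  refine Finset.sum_eq_zero fun y hy => ?_
  rw [Finset.mul_sum]
  refine Finset.sum_eq_zero fun x hx => ?_
  rw [smul_mul_assoc, smul_mul_smul_comm, hZ x (Multiset.mem_toFinset.1 hx) y
    (Multiset.mem_toFinset.1 hy), smul_zero]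

variable {R : Type*} [CommRing R] [IsDomain R] {A T : Matrix ι ι R}

theorem eq_zero_of_forall_spectralCofactor_mul_mul_eq_zero
    {Z : Matrix ι ι R} (hs : A.charpoly.Splits) (hn : A.charpoly.roots.Nodup)
    (hZ : ∀ x ∈ A.charpoly.roots, ∀ y ∈ A.charpoly.roots,
      spectralCofactor A y * Z * spectralCofactor A x = 0) : Z = 0 := by
  let φ := algebraMap R (FractionRing R)
  have hφ : Function.Injective φ := IsFractionRing.injective R (FractionRing R)
  have hchar : (φ.mapMatrix A).charpoly = A.charpoly.map φ := charpoly_map A φ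
  have hroots : (φ.mapMatrix A).charpoly.roots = A.charpoly.roots.map φ := by
    rw [hchar, hs.roots_map_of_injective hφ]
  refine Matrix.map_injective hφ ?_
  refine (eq_zero_of_forall_spectralCofactor_mul_mul_eq_zero_of_field (A := φ.mapMatrix A)
    (hchar ▸ hs.map φ) (hroots ▸ hn.map hφ) ?_).trans (Matrix.map_zero _ (map_zero φ)).symm
  simp only [hroots, Multiset.mem_map, forall_exists_index, and_imp, forall_apply_eq_imp_iff₂]
  intro x hx y hy
  rw [spectralCofactor_map, spectralCofactor_map, ← RingHom.mapMatrix_apply, ← map_mul, ← map_mul,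
    hZ x hx y hy, map_zero]

theorem spectralCofactor_mul_mul_eq_zero [IsNoetherianRing R]
    (hT : ∀ m : ℕ, ∃ k : ℕ, A ^ m ∣ T * A ^ k) {x y : R} (hx : A.charpoly.IsRoot x)
    (hy : A.charpoly.IsRoot y) {P : Ideal R} (hP : P.IsMaximal) (hxP : x ∉ P) (hyP : y ∈ P) :
    spectralCofactor A y * T * spectralCofactor A x = 0 := by
  ext i j
  rw [Matrix.zero_apply, ← Ideal.mem_bot, ← Ideal.iInf_pow_eq_bot_of_isDomain P hP.ne_top,
    Ideal.mem_iInf]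
  intro m
  obtain ⟨k, B, hB⟩ := hT m
  have hsmul : x ^ k • (spectralCofactor A y * T * spectralCofactor A x) =
      y ^ m • (spectralCofactor A y * B * spectralCofactor A x) :=
    calc x ^ k • (spectralCofactor A y * T * spectralCofactor A x)
      _ = spectralCofactor A y * (T * A ^ k) * spectralCofactor A x := by
        rw [← mul_smul_comm, ← pow_mul_spectralCofactor hx]
        simp only [mul_assoc]
      _ = spectralCofactor A y * (A ^ m * B) * spectralCofactor A x := by rw [hB]
      _ = y ^ m • (spectralCofactor A y * B * spectralCofactor A x) := by
        rw [← mul_assoc, spectralCofactor_mul_pow hy, smul_mul_assoc, smul_mul_assoc]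
  have hmem : x ^ k * (spectralCofactor A y * T * spectralCofactor A x) i j ∈ P ^ m := by
    rw [← smul_eq_mul, ← Matrix.smul_apply, hsmul, Matrix.smul_apply, smul_eq_mul]
    exact Ideal.mul_mem_right _ _ (Ideal.pow_mem_pow hyP m)
  exact (Ideal.IsMaximal.mul_mem_pow P hmem).resolve_left fun h =>
    hxP (hP.isPrime.mem_of_pow_mem k h)

theorem commute_of_forall_exists_pow_dvd [IsNoetherianRing R] (hs : A.charpoly.Splits)
    (hn : A.charpoly.roots.Nodup)
    (hsep : ∀ x ∈ A.charpoly.roots, ∀ y ∈ A.charpoly.roots, x ≠ y →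
      ∃ P : Ideal R, P.IsMaximal ∧ y ∈ P ∧ x ∉ P)
    (hT : ∀ m : ℕ, ∃ k : ℕ, A ^ m ∣ T * A ^ k) : Commute T A := by
  refine sub_eq_zero.1 <|
    eq_zero_of_forall_spectralCofactor_mul_mul_eq_zero hs hn fun x hx y hy => ?_
  have hx' : A.charpoly.IsRoot x := isRoot_of_mem_roots hx
  have hy' : A.charpoly.IsRoot y := isRoot_of_mem_roots hy
  have hcomm : spectralCofactor A y * (T * A - A * T) * spectralCofactor A x =
      (x - y) • (spectralCofactor A y * T * spectralCofactor A x) := by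
    rw [mul_sub, sub_mul, ← mul_assoc, mul_assoc _ A, mul_spectralCofactor hx', ← mul_assoc,
      spectralCofactor_mul hy', mul_smul_comm, smul_mul_assoc, smul_mul_assoc, ← sub_smul]
  rw [hcomm]
  obtain rfl | hxy := eq_or_ne x y
  · rw [sub_self, zero_smul]
  · obtain ⟨P, hP, hyP, hxP⟩ := hsep x hx y hy hxy
    rw [spectralCofactor_mul_mul_eq_zero hT hx' hy' hP hxP hyP, smul_zero]

end Sandwich

section Commutation

open NumberField

theorem exists_isMaximal_mem_notMem_of_mem_rootSet {K : Type*} [Field K] [CharZero K] [Normal ℚ K]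
    {f : ℤ[X]} (hf : f.Monic) (hirr : Irreducible (f.map (Int.castRingHom ℚ)))
    (hs : (f.map (algebraMap ℤ K)).Splits)
    (hgcd : ∀ d : ℕ, d ∣ f.natDegree →
      (∀ p : ℕ, p.Prime → d ∣ (f.map (Int.castRingHom (ZMod p))).rootMultiplicity 0) → d = 1)
    {x y : 𝓞 K} (hx : x ∈ f.rootSet (𝓞 K)) (hy : y ∈ f.rootSet (𝓞 K)) (hxy : x ≠ y) :
    ∃ P : Ideal (𝓞 K), P.IsMaximal ∧ x ∈ P ∧ y ∉ P := by
  have hsR := splits_map_ringOfIntegers hf hs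
  have hnR := nodup_aroots_of_irreducible_map (R := 𝓞 K) hirr
  have := isPretransitive_rootSet_ringOfIntegers (K := K) hf hirr
  refine exists_isMaximal_mem_notMem_of_rootSet Gal(K/ℚ) (fun d hd hdP => ?_) hx hy hxy
  refine hgcd d (ncard_rootSet_eq_natDegree_of_splits hf hsR hnR ▸ hd) fun p hp => ?_
  obtain ⟨P, hP, hpP⟩ := exists_isMaximal_natCast_mem (𝓞 K) hp
  exact ncard_rootSet_inter_ideal_eq_rootMultiplicity hf hsR hnR hp P hpP ▸ hdP P hP

theorem commute_of_forall_exists_pow_dvd_of_irreducible {ι : Type*} [Fintype ι] [DecidableEq ι]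
    {A T : Matrix ι ι ℤ} (hirr : Irreducible (A.charpoly.map (Int.castRingHom ℚ)))
    (hgcd : ∀ d : ℕ, d ∣ Fintype.card ι → (∀ p : ℕ, p.Prime →
      d ∣ (A.charpoly.map (Int.castRingHom (ZMod p))).rootMultiplicity 0) → d = 1)
    (hT : ∀ m : ℕ, ∃ k : ℕ, A ^ m ∣ T * A ^ k) : Commute T A := by
  obtain ⟨K, _, _, _, hs⟩ :=
    exists_numberField_normal_splits (A.charpoly.map (Int.castRingHom ℚ))
  rw [Polynomial.map_map, RingHom.ext_int ((algebraMap ℚ K).comp _) (algebraMap ℤ K)] at hs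
  let φ := (algebraMap ℤ (𝓞 K)).mapMatrix (m := ι)
  have hchar : (φ A).charpoly = A.charpoly.map (algebraMap ℤ (𝓞 K)) := charpoly_map A _
  have hmem {x : 𝓞 K} (hx : x ∈ (φ A).charpoly.roots) : x ∈ A.charpoly.rootSet (𝓞 K) := by
    classical
    rwa [rootSet_def, Finset.mem_coe, Multiset.mem_toFinset, aroots_def, ← hchar]
  have hcomm : Commute (φ T) (φ A) := by
    refine commute_of_forall_exists_pow_dvd
      (hchar ▸ splits_map_ringOfIntegers A.charpoly_monic hs)
      (hchar ▸ nodup_aroots_of_irreducible_map hirr) (fun x hx y hy hxy => ?_) fun m => ?_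
    · exact exists_isMaximal_mem_notMem_of_mem_rootSet A.charpoly_monic hirr hs
        (A.charpoly_natDegree_eq_dim ▸ hgcd) (hmem hy) (hmem hx) hxy.symm
    · obtain ⟨k, hk⟩ := hT m
      exact ⟨k, by simpa only [map_mul, map_pow] using map_dvd φ hk⟩
  exact hcomm.of_map (Matrix.map_injective (FaithfulSMul.algebraMap_injective ℤ (𝓞 K)))

end Commutation

section Ncond

variable {n : ℕ} {A T : Matrix (Fin n) (Fin n) ℤ}

theorem Aq_eq_mapMatrix (A : Matrix (Fin n) (Fin n) ℤ) :
    Aq A = (Int.castRingHom ℚ).mapMatrix A :=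
  rfl

theorem isUnit_det_Aq_pow (hA : A.det ≠ 0) (m : ℕ) : IsUnit (Aq A ^ m).det := by
  rw [Aq_eq_mapMatrix, Matrix.det_pow, ← RingHom.map_det]
  exact (isUnit_iff_ne_zero.2 (Int.cast_ne_zero.2 hA)).pow m

theorem exists_pow_dvd_mul_pow_of_ncond (hA : A.det ≠ 0) (hT : Ncond A T) (m : ℕ) :
    ∃ k : ℕ, A ^ m ∣ T * A ^ k := by
  obtain ⟨k, hk⟩ := hT.2 m
  choose B hB using hk
  refine ⟨k, Matrix.of B, ?_⟩
  have hB' : Aq (Matrix.of B) = (Aq A ^ m)⁻¹ * (Aq T * Aq A ^ k) := by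
    rw [← Matrix.inv_pow', ← mul_assoc]
    ext i j
    exact (hB i j).symm
  have hmap : (Int.castRingHom ℚ).mapMatrix (T * A ^ k) =
      (Int.castRingHom ℚ).mapMatrix (A ^ m * Matrix.of B) := by
    simp only [map_mul, map_pow, ← Aq_eq_mapMatrix]
    rw [hB', Matrix.mul_nonsing_inv_cancel_left _ _ (isUnit_det_Aq_pow hA m)]
  exact Matrix.map_injective (Int.castRingHom ℚ).injective_int hmap

theorem ncond_of_commute (hA : A.det ≠ 0) (hdet : T.det = 1 ∨ T.det = -1) (hT : Commute T A) :
    Ncond A T := by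
  refine ⟨hdet, fun m => ⟨m, fun i j => ⟨T i j, ?_⟩⟩⟩
  have hcomm : Commute (Aq T) (Aq A ^ m) :=
    (hT.map (Int.castRingHom ℚ).mapMatrix).pow_right m
  have hcancel : (Aq A)⁻¹ ^ m * Aq T * Aq A ^ m = Aq T := by
    rw [mul_assoc, hcomm.eq, Matrix.inv_pow', Matrix.nonsing_inv_mul_cancel_left _ _
      (isUnit_det_Aq_pow hA m)]
  exact congrFun₂ hcancel i j

end Ncond

section PolynomialsInMatrix

variable {ι k : Type*} [Fintype ι] [DecidableEq ι] [Field k]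

/-- Evaluation of polynomials at `A`, as a homomorphism from `k[X] / (χ)`, where `χ` is the
characteristic polynomial of `A`. -/
def adjoinRootEval (A : Matrix ι ι k) : AdjoinRoot A.charpoly →ₐ[k] Matrix ι ι k :=
  Ideal.Quotient.liftₐ _ (aeval A) fun q hq => by
    obtain ⟨r, rfl⟩ := Ideal.mem_span_singleton.1 hq
    rw [map_mul, aeval_self_charpoly, zero_mul]

theorem commute_adjoinRootEval {A T : Matrix ι ι k} (hT : Commute T A)
    (a : AdjoinRoot A.charpoly) : Commute T (adjoinRootEval A a) := by
  induction a using AdjoinRoot.induction_on with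
  | ih q =>
    exact Algebra.commute_of_mem_adjoin_singleton_of_commute
      (aeval_mem_adjoin_singleton k A) hT

theorem finrank_adjoinRoot {f : k[X]} : Module.finrank k (AdjoinRoot f) = f.natDegree :=
  finrank_quotient_span_eq_natDegree

theorem nonempty_of_irreducible_charpoly {A : Matrix ι ι k} (hA : Irreducible A.charpoly) :
    Nonempty ι := by
  rw [← Fintype.card_pos_iff, ← A.charpoly_natDegree_eq_dim]
  exact hA.natDegree_pos

variable (A : Matrix ι ι k) [hA : Fact (Irreducible A.charpoly)]

theorem adjoinRootEval_injective : Function.Injective (adjoinRootEval A) := by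
  have := nonempty_of_irreducible_charpoly hA.out
  exact (adjoinRootEval A).toRingHom.injective

theorem isIntegral_adjoinRootEval_iff {R : Type*} [CommRing R] [Algebra R k]
    {a : AdjoinRoot A.charpoly} : IsIntegral R (adjoinRootEval A a) ↔ IsIntegral R a :=
  isIntegral_algHom_iff ((adjoinRootEval A).restrictScalars R) (adjoinRootEval_injective A)

theorem adjoinRootEval_mulVec_surjective {v : ι → k} (hv : v ≠ 0) :
    Function.Surjective fun a => adjoinRootEval A a *ᵥ v := by
  let L : AdjoinRoot A.charpoly →ₗ[k] (ι → k) :=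
    (Matrix.mulVecBilin k k).flip v ∘ₗ (adjoinRootEval A).toLinearMap
  have hL : Function.Injective L := by
    refine (injective_iff_map_eq_zero L).2 fun a ha => of_not_not fun ha0 => hv ?_
    have ha' : adjoinRootEval A a *ᵥ v = 0 := ha
    rw [← one_mulVec v, ← map_one (adjoinRootEval A), ← inv_mul_cancel₀ ha0, map_mul,
      ← mulVec_mulVec, ha', mulVec_zero]
  have : FiniteDimensional k (AdjoinRoot A.charpoly) := A.charpoly_monic.finite_adjoinRoot
  refine (LinearMap.injective_iff_surjective_of_finrank_eq_finrank ?_).1 hL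
  rw [finrank_adjoinRoot, A.charpoly_natDegree_eq_dim, Module.finrank_fintype_fun_eq_card]

theorem range_adjoinRootEval : (adjoinRootEval A).range = Subalgebra.centralizer k {A} := by
  have := nonempty_of_irreducible_charpoly hA.out
  ext T
  simp only [AlgHom.mem_range, Subalgebra.mem_centralizer_iff, Set.mem_singleton_iff, forall_eq]
  refine ⟨?_, fun hT => ?_⟩
  · rintro ⟨a, rfl⟩
    exact commute_adjoinRootEval (.refl A) a
  · obtain ⟨v, hv⟩ := exists_ne (0 : ι → k)
    have hsurj := adjoinRootEval_mulVec_surjective A hv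
    obtain ⟨a, ha⟩ := hsurj (T *ᵥ v)
    refine ⟨a, Matrix.ext_of_mulVec_single fun i => ?_⟩
    obtain ⟨b, hb⟩ := hsurj (Pi.single i 1)
    dsimp only at ha hb
    rw [← hb, mulVec_mulVec, mulVec_mulVec, ← map_mul, mul_comm, map_mul, ← mulVec_mulVec, ha,
      mulVec_mulVec, (commute_adjoinRootEval (Eq.symm hT) b).eq]

/-- When the characteristic polynomial of `A` is irreducible, the centralizer of `A` is the field
obtained by adjoining one of its roots. -/
def adjoinRootEquivCentralizer :
    AdjoinRoot A.charpoly ≃ₐ[k] Subalgebra.centralizer k {A} :=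
  (AlgEquiv.ofInjective _ (adjoinRootEval_injective A)).trans
    (Subalgebra.equivOfEq _ _ (range_adjoinRootEval A))

theorem adjoinRootEval_adjoinRootEquivCentralizer_symm (T : Subalgebra.centralizer k {A}) :
    adjoinRootEval A ((adjoinRootEquivCentralizer A).symm T) = T :=
  congrArg Subtype.val ((adjoinRootEquivCentralizer A).apply_symm_apply T)

end PolynomialsInMatrix

section UnitsOfCentralizer

open NumberField

theorem mem_units_centralizer_singleton_iff {M : Type*} [Monoid M] {a : M} {u : Mˣ} :
    u ∈ (Submonoid.centralizer {a}).units ↔ Commute (u : M) a := by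
  simp only [Submonoid.mem_units_iff, Submonoid.mem_centralizer_iff, Set.mem_singleton_iff,
    forall_eq, ← commute_iff_eq, Commute.symm_iff (a := a)]
  exact ⟨fun h => h.1, fun h => ⟨h, Commute.units_inv_left h⟩⟩

theorem exists_injective_centralizer_hom_ringOfIntegers {ι : Type*} [Fintype ι] [DecidableEq ι]
    (A : Matrix ι ι ℤ) [Fact (Irreducible ((Int.castRingHom ℚ).mapMatrix A).charpoly)] :
    ∃ φ : Submonoid.centralizer {A} →*
      𝓞 (AdjoinRoot ((Int.castRingHom ℚ).mapMatrix A).charpoly), Function.Injective φ := by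
  let i := (Int.castRingHom ℚ).mapMatrix (m := ι)
  have hi : Function.Injective i := Matrix.map_injective (Int.castRingHom ℚ).injective_int
  let g : Submonoid.centralizer {A} →* Subalgebra.centralizer ℚ {i A} :=
    ((i : Matrix ι ι ℤ →* Matrix ι ι ℚ).comp (Submonoid.subtype _)).codRestrict _ fun T => by
      have hT : A * T = T * A := T.2 A rfl
      rintro _ rfl
      exact (map_mul i _ _).symm.trans ((congrArg i hT).trans (map_mul i _ _))
  have hg : Function.Injective g := fun S T hST =>
    Subtype.ext (hi (congrArg Subtype.val hST))
  let e := adjoinRootEquivCentralizer (i A)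
  have hint (T : Submonoid.centralizer {A}) : IsIntegral ℤ (e.symm (g T)) := by
    rw [← isIntegral_adjoinRootEval_iff, adjoinRootEval_adjoinRootEquivCentralizer_symm]
    exact (Matrix.isIntegral (T : Matrix ι ι ℤ)).map i.toIntAlgHom
  refine ⟨RingOfIntegers.restrict_monoidHom ((e.symm : _ →* _).comp g) hint, fun S T hST => ?_⟩
  exact hg (e.symm.injective (congrArg (algebraMap (𝓞 _) _) hST))

theorem group_fg_of_injective {G N : Type*} [Group G] [CommGroup N] [Module.Finite ℤ (Additive N)]
    {φ : G →* N} (hφ : Function.Injective φ) : Group.FG G := by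
  have hrange : Module.Finite ℤ (Additive φ.range) :=
    .of_injective φ.range.subtype.toAdditive.toIntLinearMap φ.range.subtype_injective
  have : Group.FG φ.range := GroupFG.iff_add_fg.2 (Module.Finite.iff_addGroup_fg.1 hrange)
  exact Group.fg_of_surjective (f := (MonoidHom.ofInjective hφ).symm.toMonoidHom)
    (MonoidHom.ofInjective hφ).symm.surjective

theorem finite_units_ringOfIntegers_of_isTotallyComplex {K : Type*} [Field K] [NumberField K]
    [IsTotallyComplex K] (hK : Module.finrank ℚ K = 2) : Finite (𝓞 K)ˣ := by
  have hplaces := InfinitePlace.card_eq_nrRealPlaces_add_nrComplexPlaces K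
  have hrank : Units.rank K = 0 := by
    rw [IsTotallyComplex.finrank] at hK
    rw [Units.rank, hplaces, IsTotallyComplex.nrRealPlaces_eq_zero]
    omega
  have : IsEmpty (Fin (Units.rank K)) := by rw [hrank]; infer_instance
  refine Finite.of_surjective (Subtype.val : Units.torsion K → (𝓞 K)ˣ) fun u => ?_
  obtain ⟨⟨ζ, e⟩, hu, -⟩ := Units.exist_unique_eq_mul_prod K u
  exact ⟨ζ, by rw [hu, Finset.univ_eq_empty, Finset.prod_empty, mul_one]⟩

theorem isTotallyComplex_adjoinRoot {f : ℚ[X]} [Fact (Irreducible f)]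
    (hf : ∀ r : ℝ, ¬ (f.map (algebraMap ℚ ℝ)).IsRoot r) : IsTotallyComplex (AdjoinRoot f) where
  isComplex w := InfinitePlace.not_isReal_iff_isComplex.1 fun hw => by
    let σ := InfinitePlace.embedding_of_isReal hw
    refine hf (σ (AdjoinRoot.root f)) ?_
    rw [IsRoot.def, eval_map, Subsingleton.elim (algebraMap ℚ ℝ) (σ.comp (AdjoinRoot.of f)),
      ← hom_eval₂, AdjoinRoot.eval₂_root, map_zero]

end UnitsOfCentralizer

section CentralizerUnits

open NumberField

variable {ι : Type*} [Fintype ι] [DecidableEq ι] (A : Matrix ι ι ℤ)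
  [hirr : Fact (Irreducible (A.charpoly.map (Int.castRingHom ℚ)))]

theorem exists_injective_units_centralizer_hom :
    ∃ φ : (Submonoid.centralizer {A}).units →*
      (𝓞 (AdjoinRoot (A.charpoly.map (Int.castRingHom ℚ))))ˣ, Function.Injective φ := by
  revert hirr
  rw [← charpoly_map, ← RingHom.mapMatrix_apply]
  intro hirr
  obtain ⟨φ, hφ⟩ := exists_injective_centralizer_hom_ringOfIntegers A
  exact ⟨(Units.map φ).comp (Submonoid.unitsEquivUnitsType _).toMonoidHom,
    (Units.map_injective hφ).comp (MulEquiv.injective _)⟩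

theorem units_centralizer_mul_comm (S T : (Submonoid.centralizer {A}).units) : S * T = T * S := by
  obtain ⟨φ, hφ⟩ := exists_injective_units_centralizer_hom A
  exact hφ <| by rw [map_mul, map_mul, mul_comm]

theorem group_fg_units_centralizer : Group.FG (Submonoid.centralizer {A}).units := by
  obtain ⟨φ, hφ⟩ := exists_injective_units_centralizer_hom A
  exact group_fg_of_injective hφ

theorem finite_units_centralizer (hι : Fintype.card ι = 2)
    (hreal : ∀ r : ℝ, ¬ (A.charpoly.map (Int.castRingHom ℝ)).IsRoot r) :
    Finite (Submonoid.centralizer {A}).units := by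
  obtain ⟨φ, hφ⟩ := exists_injective_units_centralizer_hom A
  have := isTotallyComplex_adjoinRoot (f := A.charpoly.map (Int.castRingHom ℚ)) fun r => by
    rw [Polynomial.map_map, RingHom.ext_int ((algebraMap ℚ ℝ).comp _) (Int.castRingHom ℝ)]
    exact hreal r
  have := finite_units_ringOfIntegers_of_isTotallyComplex
    (K := AdjoinRoot (A.charpoly.map (Int.castRingHom ℚ))) <| by
    rw [finrank_adjoinRoot, A.charpoly_monic.natDegree_map, A.charpoly_natDegree_eq_dim, hι]
  exact .of_injective φ hφ

end CentralizerUnits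

theorem stmt18_general (n : ℕ) (A : Matrix (Fin n) (Fin n) ℤ) (hA : A.det ≠ 0)
    (hirr : Irreducible (A.charpoly.map (Int.castRingHom ℚ)))
    (hgcd : ∀ d : ℕ, d ∣ n → (∀ p : ℕ, p.Prime → d ∣ tp A p) → d = 1) :
    ({T : Matrix (Fin n) (Fin n) ℤ | Ncond A T} =
        {T : Matrix (Fin n) (Fin n) ℤ | (T.det = 1 ∨ T.det = -1) ∧ T * A = A * T}) ∧
      ∃ H : Subgroup (Matrix (Fin n) (Fin n) ℤ)ˣ,
        (∀ T : (Matrix (Fin n) (Fin n) ℤ)ˣ, T ∈ H ↔ Ncond A (T : Matrix (Fin n) (Fin n) ℤ)) ∧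
        (∀ a b : H, a * b = b * a) ∧
        Group.FG H ∧
        (n = 2 → (∀ r : ℝ, ¬ (A.charpoly.map (Int.castRingHom ℝ)).IsRoot r) →
          Finite H) := by
  have := Fact.mk hirr
  have hN (T : Matrix (Fin n) (Fin n) ℤ) :
      Ncond A T ↔ (T.det = 1 ∨ T.det = -1) ∧ Commute T A :=
    ⟨fun hT => ⟨hT.1, commute_of_forall_exists_pow_dvd_of_irreducible hirr
      ((Fintype.card_fin n).symm ▸ hgcd) (exists_pow_dvd_mul_pow_of_ncond hA hT)⟩,
      fun hT => ncond_of_commute hA hT.1 hT.2⟩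
  have hdet (T : (Matrix (Fin n) (Fin n) ℤ)ˣ) : T.val.det = 1 ∨ T.val.det = -1 :=
    Int.isUnit_iff.1 ((Matrix.isUnit_iff_isUnit_det _).1 T.isUnit)
  refine ⟨Set.ext hN, (Submonoid.centralizer {A}).units, fun T => ?_,
    units_centralizer_mul_comm A, group_fg_units_centralizer A, fun hn =>
      finite_units_centralizer A (hn ▸ Fintype.card_fin n)⟩
  rw [hN, mem_units_centralizer_singleton_iff]
  exact (and_iff_right (hdet T)).symm

/-- `N⃗(X_A)` is the centralizer of `A` in `GL_n(ℤ)`; it is a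
commutative, finitely generated group, finite when `n = 2` and `h_A` has no real
roots. -/
theorem stmt18 (n : ℕ) (A : Matrix (Fin n) (Fin n) ℤ) (hA : A.det ≠ 0)
    (hirr : Irreducible (A.charpoly.map (Int.castRingHom ℚ)))
    (hP' : (Pbad A).Nonempty)
    (hcop : ∃ p : ℕ, p.Prime ∧ Nat.gcd n (tp A p) = 1) :
    ({T : Matrix (Fin n) (Fin n) ℤ | Ncond A T} =
        {T : Matrix (Fin n) (Fin n) ℤ | (T.det = 1 ∨ T.det = -1) ∧ T * A = A * T}) ∧
      ∃ H : Subgroup (Matrix (Fin n) (Fin n) ℤ)ˣ,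
        (∀ T : (Matrix (Fin n) (Fin n) ℤ)ˣ, T ∈ H ↔ Ncond A (T : Matrix (Fin n) (Fin n) ℤ)) ∧
        (∀ a b : H, a * b = b * a) ∧
        Group.FG H ∧
        (n = 2 → (∀ r : ℝ, ¬ (A.charpoly.map (Int.castRingHom ℝ)).IsRoot r) →
          Finite H) := by
  obtain ⟨p, hp, hnp⟩ := hcop
  exact stmt18_general n A hA hirr fun d hdn hdt =>
    Nat.dvd_one.1 (hnp ▸ Nat.dvd_gcd hdn (hdt p hp))
end
end
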